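/- arXiv:1108.6215 — 6 statements merged into one kernel-verified Lean document; each statement's English description precedes it below -/
import Mathlib

section
/- For L = ℚ(ζ_{12}) and K = ℚ(√3) one has M(K) = 1/2 and M(L) = 1/4, so that M(L) = M(K)^2. -/
open NumberField

noncomputable def eucMin (K : Type*) [Field K] [NumberField K] : ℝ :=
  ⨆ ξ : K, ⨅ η : 𝓞 K, |((Algebra.norm ℚ (ξ - (η : K)) : ℚ) : ℝ)|

theorem eucMin_eq_of {F : Type*} [Field F] [NumberField F] (c : ℚ)
    (h1 : ∀ ξ : F, ∃ η : 𝓞 F, |Algebra.norm ℚ (ξ - (η : F))| ≤ c)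
    (h2 : ∃ ξ : F, ∀ η : 𝓞 F, c ≤ |Algebra.norm ℚ (ξ - (η : F))|) :
    eucMin F = (c : ℝ) := by
  have hb : ∀ ξ : F, BddBelow (Set.range fun η : 𝓞 F =>
      |((Algebra.norm ℚ (ξ - (η : F)) : ℚ) : ℝ)|) := by
    intro ξ
    refine ⟨0, ?_⟩
    rintro _ ⟨η, rfl⟩
    exact abs_nonneg _
  have hu : ∀ ξ : F, (⨅ η : 𝓞 F, |((Algebra.norm ℚ (ξ - (η : F)) : ℚ) : ℝ)|) ≤ c := by
    intro ξ
    obtain ⟨η, hη⟩ := h1 ξ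
    refine ciInf_le_of_le (hb ξ) η ?_
    exact_mod_cast hη
  unfold eucMin
  apply le_antisymm
  · exact ciSup_le hu
  · obtain ⟨ξ, hξ⟩ := h2
    refine le_ciSup_of_le ⟨c, ?_⟩ ξ ?_
    · rintro _ ⟨ξ, rfl⟩
      exact hu ξ
    · refine le_ciInf fun η => ?_
      exact_mod_cast hξ η

theorem lower_bound {F : Type*} [Field F] [NumberField F] (ϖ : 𝓞 F) (n : ℚ) (hn : 1 < n)
    (hϖ : |Algebra.norm ℚ (ϖ : F)| = n) :
    ∃ ξ : F, ∀ η : 𝓞 F, 1 / n ≤ |Algebra.norm ℚ (ξ - (η : F))| := by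
  have h0 : (ϖ : F) ≠ 0 := by
    intro h
    rw [h, Algebra.norm_zero] at hϖ
    simp at hϖ
    linarith
  refine ⟨(ϖ : F)⁻¹, fun η => ?_⟩
  have key : Algebra.norm ℚ ((1 - η * ϖ : 𝓞 F) : F)
      = Algebra.norm ℚ ((ϖ : F)⁻¹ - (η : F)) * Algebra.norm ℚ (ϖ : F) := by
    rw [← map_mul]
    congr 1
    push_cast
    field_simp
  have hne : (1 - η * ϖ : 𝓞 F) ≠ 0 := by
    intro h
    have h' : η * ϖ = 1 := (sub_eq_zero.mp h).symm
    have h3 : Algebra.norm ℤ η * Algebra.norm ℤ ϖ = 1 := by rw [← map_mul, h', map_one]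
    have h4 : IsUnit (Algebra.norm ℤ ϖ) := IsUnit.of_mul_eq_one_right _ h3
    have h5 : |Algebra.norm ℤ ϖ| = 1 := Int.isUnit_iff_abs_eq.mp h4
    have h6 : |Algebra.norm ℚ (ϖ : F)| = 1 := by
      rw [← Algebra.coe_norm_int]
      exact_mod_cast h5
    linarith
  have h7 : (1 : ℚ) ≤ |Algebra.norm ℚ ((1 - η * ϖ : 𝓞 F) : F)| := by
    rw [← Algebra.coe_norm_int]
    have : Algebra.norm ℤ (1 - η * ϖ) ≠ 0 := by
      rw [Ne, Algebra.norm_eq_zero_iff]; exact hne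
    exact_mod_cast Int.one_le_abs this
  rw [key, abs_mul, hϖ] at h7
  rw [div_le_iff₀ (by linarith)]
  exact h7

theorem rat_sq_three (a b : ℚ) (h : a ^ 2 = 3 * b ^ 2) : b = 0 := by
  by_contra hb
  have h1 : (a / b) ^ 2 = 3 := by field_simp; linarith
  have h2 : Irrational (Real.sqrt 3) := by
    have := Nat.Prime.irrational_sqrt Nat.prime_three
    exact_mod_cast this
  apply h2
  refine ⟨|a / b|, ?_⟩
  rw [eq_comm, Real.sqrt_eq_iff_eq_sq (by norm_num) (by positivity)]
  rw [← Rat.cast_pow, sq_abs, h1]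
  norm_num

theorem basisK {K : Type*} [Field K] [NumberField K]
    (θ : K) (hθ : θ ^ 2 = 3) (hK : Module.finrank ℚ K = 2) :
    ∃ b : Module.Basis (Fin 2) ℚ K, ⇑b = ![1, θ] := by
  have hli : LinearIndependent ℚ ![(1 : K), θ] := by
    rw [LinearIndependent.pair_iff]
    intro a b h
    have h1 : (a : K) = - (b * θ) := by
      rw [Algebra.smul_def, Algebra.smul_def] at h
      simp at h
      linear_combination h
    have h2 : (a : K) ^ 2 = 3 * (b : K) ^ 2 := by rw [h1, ← hθ]; ring
    have h3 : b = 0 := rat_sq_three a b (by exact_mod_cast h2)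
    subst h3
    simp at h1
    exact ⟨h1, rfl⟩
  exact ⟨basisOfLinearIndependentOfCardEqFinrank hli (by simp [hK]), by simp⟩

theorem normK {K : Type*} [Field K] [NumberField K]
    (θ : K) (hθ : θ ^ 2 = 3) (hK : Module.finrank ℚ K = 2) (x y : ℚ) :
    Algebra.norm ℚ ((x : K) + y * θ) = x ^ 2 - 3 * y ^ 2 := by
  obtain ⟨b, hb⟩ := basisK θ hθ hK
  have : Algebra.lmul ℚ K ((x : K) + y * θ) = Matrix.toLin b b !![x, 3 * y; y, x] := by
    apply b.ext
    intro j
    rw [Matrix.toLin_self]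
    fin_cases j <;> simp [hb, Fin.sum_univ_two, Algebra.smul_def]
    linear_combination (y : K) * hθ
  rw [Algebra.norm_apply]
  change LinearMap.det (Algebra.lmul ℚ K ((x : K) + y * θ)) = _
  rw [this, LinearMap.det_toLin, Matrix.det_fin_two]
  simp
  ring

theorem eucK {K : Type*} [Field K] [NumberField K]
    (θ : K) (hθ : θ ^ 2 = 3) (hK : Module.finrank ℚ K = 2) : eucMin K = 1 / 2 := by
  have hint : IsIntegral ℤ θ := by
    refine IsIntegral.of_pow (n := 2) (by norm_num) ?_
    rw [hθ]
    have := isIntegral_algebraMap (R := ℤ) (A := K) (x := 3)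
    simpa using this
  obtain ⟨t, ht⟩ : ∃ t : 𝓞 K, algebraMap (𝓞 K) K t = θ := ⟨⟨θ, hint⟩, rfl⟩
  have := eucMin_eq_of (F := K) (1 / 2) ?_ ?_
  · rw [this]; norm_num
  · intro ξ
    obtain ⟨b, hb⟩ := basisK θ hθ hK
    obtain ⟨x, y, hxy⟩ : ∃ x y : ℚ, ξ = x + y * θ := by
      refine ⟨b.repr ξ 0, b.repr ξ 1, ?_⟩
      conv_lhs => rw [← b.sum_repr ξ]
      simp [hb, Fin.sum_univ_two, Algebra.smul_def]
    have main : ∃ m n : ℤ, |(x - m) ^ 2 - 3 * (y - n) ^ 2| ≤ 1 / 2 := by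
      have hx := abs_sub_round x
      have hy := abs_sub_round y
      set m := round x
      set n := round y
      rw [abs_le] at hx hy
      by_cases hc : 3 * (y - n) ^ 2 - (x - m) ^ 2 ≤ 1 / 2
      · refine ⟨m, n, ?_⟩
        rw [abs_le]
        constructor <;> nlinarith
      · push Not at hc
        rcases le_total 0 (x - m) with h | h
        · refine ⟨m + 1, n, ?_⟩
          push_cast
          rw [abs_le]
          constructor <;> nlinarith
        · refine ⟨m - 1, n, ?_⟩
          push_cast
          rw [abs_le]
          constructor <;> nlinarith
    obtain ⟨m, n, hmn⟩ := main
    refine ⟨m + n * t, ?_⟩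
    have e : ξ - ((m + n * t : 𝓞 K) : K) = ((x - m : ℚ) : K) + ((y - n : ℚ) : K) * θ := by
      rw [hxy]; simp only [map_add, map_mul, map_intCast, ht]; push_cast; ring
    rw [e, normK θ hθ hK]
    exact hmn
  · refine lower_bound (1 + t) 2 (by norm_num) ?_
    have e : ((1 + t : 𝓞 K) : K) = ((1 : ℚ) : K) + ((1 : ℚ) : K) * θ := by
      simp only [map_add, map_one, ht]; push_cast; ring
    rw [e, normK θ hθ hK]
    norm_num

/-- Real and imaginary part of the relative norm form `p² + (i-1)pq + iq²`. -/
def Fre (x y s t : ℚ) : ℚ := x ^ 2 - y ^ 2 - (x * s - y * t) - (x * t + y * s) - 2 * s * t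
def Fim (x y s t : ℚ) : ℚ := 2 * x * y + (x * s - y * t) - (x * t + y * s) + s ^ 2 - t ^ 2
/-- The norm form of `ℚ(ζ₁₂)`. -/
def Nf (x y s t : ℚ) : ℚ := Fre x y s t ^ 2 + Fim x y s t ^ 2

theorem two_Nf (x y s t : ℚ) : 2 * Nf x y s t = 3 * (x ^ 2 + y ^ 2 + s ^ 2 + t ^ 2) ^ 2
    - (x ^ 2 + y ^ 2 - s ^ 2 - t ^ 2 + 2 * ((x * s + y * t) - (y * s - x * t))) ^ 2 := by
  unfold Nf Fre Fim; ring

theorem Nf_le_of (x y s t : ℚ) (h : x ^ 2 + y ^ 2 + s ^ 2 + t ^ 2 ≤ 8164 / 10000) :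
    Nf x y s t ≤ 1 := by
  have h1 := two_Nf x y s t
  have h2 : 0 ≤ x ^ 2 + y ^ 2 + s ^ 2 + t ^ 2 := by positivity
  nlinarith [sq_nonneg (x ^ 2 + y ^ 2 - s ^ 2 - t ^ 2 + 2 * ((x * s + y * t) - (y * s - x * t)))]

theorem local_step (E f1 f2 g1 g2 : ℚ) (hE0 : 0 ≤ E) (hE : E ≤ 5877 / 100000)
    (hF : f1 ^ 2 + f2 ^ 2 ≤ 3 / 2 * E ^ 2) (hG : g1 ^ 2 + g2 ^ 2 ≤ 6 * E) (hg : 0 ≤ g1)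
    (hg1 : 3 / 2 * E ≤ g1 ^ 2) : (1 + f1 - g1) ^ 2 + (f2 - g2) ^ 2 ≤ 1 := by
  have hEE : E ^ 2 ≤ 5877 / 100000 * E := by nlinarith
  have a1 : f1 ≤ 12248 / 10000 * E := by
    apply le_of_sq_le_sq _ (by positivity)
    nlinarith [sq_nonneg f2]
  have a2 : -(2 * (f1 * g1 + f2 * g2)) ≤ 1455 / 1000 * E := by
    have : -(2 * (f1 * g1 + f2 * g2)) ≤ (f1 ^ 2 + f2 ^ 2) / (1212 / 10000)
        + (1212 / 10000) * (g1 ^ 2 + g2 ^ 2) := by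
      nlinarith [sq_nonneg (f1 + 1212 / 10000 * g1), sq_nonneg (f2 + 1212 / 10000 * g2)]
    linarith
  have a3 : 4997 / 1000 * E ≤ g1 := by
    apply le_of_sq_le_sq _ hg
    nlinarith
  nlinarith

theorem local_min (x y s t : ℚ) (h : x ^ 2 + y ^ 2 + s ^ 2 + t ^ 2 ≤ 5877 / 100000) :
    ∃ e : ℚ, (e = 1 ∨ e = -1) ∧ (Nf (x - e) y s t ≤ 1 ∨ Nf x (y - e) s t ≤ 1 ∨
      Nf x y (s - e) t ≤ 1 ∨ Nf x y s (t - e) ≤ 1) := by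
  set E := x ^ 2 + y ^ 2 + s ^ 2 + t ^ 2 with hE
  have hE0 : 0 ≤ E := by positivity
  have hF : Fre x y s t ^ 2 + Fim x y s t ^ 2 ≤ 3 / 2 * E ^ 2 := by
    have h1 := two_Nf x y s t
    unfold Nf at h1
    nlinarith [sq_nonneg (x ^ 2 + y ^ 2 - s ^ 2 - t ^ 2 + 2 * ((x * s + y * t) - (y * s - x * t)))]
  have hs : (2 * x - s - t) ^ 2 + (2 * y + s - t) ^ 2 + (2 * s + x - y) ^ 2 + (2 * t + x + y) ^ 2
      = 6 * E := by rw [hE]; ring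
  have q1 := sq_nonneg (2 * x - s - t)
  have q2 := sq_nonneg (2 * y + s - t)
  have q3 := sq_nonneg (2 * s + x - y)
  have q4 := sq_nonneg (2 * t + x + y)
  have hex : 3 / 2 * E ≤ (2 * x - s - t) ^ 2 ∨ 3 / 2 * E ≤ (2 * y + s - t) ^ 2 ∨
      3 / 2 * E ≤ (2 * s + x - y) ^ 2 ∨ 3 / 2 * E ≤ (2 * t + x + y) ^ 2 := by
    by_contra! hcon
    linarith [hcon.1, hcon.2.1, hcon.2.2.1, hcon.2.2.2]
  rcases hex with hl | hl | hl | hl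
  · rcases le_total 0 (2 * x - s - t) with h0 | h0
    · refine ⟨1, Or.inl rfl, Or.inl ?_⟩
      have := local_step E (Fre x y s t) (Fim x y s t) (2 * x - s - t) (2 * y + s - t) hE0 h
        (by linarith) (by linarith) h0 hl
      convert this using 1
      unfold Nf Fre Fim; ring
    · refine ⟨-1, Or.inr rfl, Or.inl ?_⟩
      have := local_step E (Fre x y s t) (Fim x y s t) (-(2 * x - s - t)) (-(2 * y + s - t)) hE0 h
        (by linarith) (by linarith) (by linarith) (by linarith)
      convert this using 1
      unfold Nf Fre Fim; ring
  · rcases le_total 0 (2 * y + s - t) with h0 | h0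
    · refine ⟨1, Or.inl rfl, Or.inr (Or.inl ?_)⟩
      have := local_step E (-Fre x y s t) (-Fim x y s t) (2 * y + s - t) (-(2 * x - s - t)) hE0 h
        (by linarith) (by linarith) h0 hl
      convert this using 1
      unfold Nf Fre Fim; ring
    · refine ⟨-1, Or.inr rfl, Or.inr (Or.inl ?_)⟩
      have := local_step E (-Fre x y s t) (-Fim x y s t) (-(2 * y + s - t)) ((2 * x - s - t)) hE0 h
        (by linarith) (by linarith) (by linarith) (by linarith)
      convert this using 1
      unfold Nf Fre Fim; ring
  · rcases le_total 0 (2 * s + x - y) with h0 | h0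
    · refine ⟨1, Or.inl rfl, Or.inr (Or.inr (Or.inl ?_))⟩
      have := local_step E (Fim x y s t) (-Fre x y s t) (2 * s + x - y) (2 * t + x + y) hE0 h
        (by linarith) (by linarith) h0 hl
      convert this using 1
      unfold Nf Fre Fim; ring
    · refine ⟨-1, Or.inr rfl, Or.inr (Or.inr (Or.inl ?_))⟩
      have := local_step E (Fim x y s t) (-Fre x y s t) (-(2 * s + x - y)) (-(2 * t + x + y)) hE0 h
        (by linarith) (by linarith) (by linarith) (by linarith)
      convert this using 1
      unfold Nf Fre Fim; ring
  · rcases le_total 0 (2 * t + x + y) with h0 | h0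
    · refine ⟨1, Or.inl rfl, Or.inr (Or.inr (Or.inr ?_))⟩
      have := local_step E (-Fim x y s t) (Fre x y s t) (2 * t + x + y) (-(2 * s + x - y)) hE0 h
        (by linarith) (by linarith) h0 hl
      convert this using 1
      unfold Nf Fre Fim; ring
    · refine ⟨-1, Or.inr rfl, Or.inr (Or.inr (Or.inr ?_))⟩
      have := local_step E (-Fim x y s t) (Fre x y s t) (-(2 * t + x + y)) (2 * s + x - y) hE0 h
        (by linarith) (by linarith) (by linarith) (by linarith)
      convert this using 1
      unfold Nf Fre Fim; ring

theorem exists_sign (x : ℚ) : ∃ e : ℚ, (e = 1 ∨ e = -1) ∧ e * x = |x| := by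
  rcases le_total 0 x with h | h
  · exact ⟨1, Or.inl rfl, by rw [abs_of_nonneg h, one_mul]⟩
  · exact ⟨-1, Or.inr rfl, by rw [abs_of_nonpos h]; ring⟩

theorem small_m (E m : ℚ) (hm : 0 ≤ m) (h1 : E ≤ 1 / 2) (h2 : E ≤ 4 * m ^ 2)
    (h3 : 8164 / 10000 < 1 + E - 2 * m) : E ≤ 5877 / 100000 := by
  have a : m < 35 / 100 := by linarith
  have b : m < 1212 / 10000 := by
    by_contra! hc
    nlinarith
  nlinarith

theorem hole_min (x y s t : ℚ) (h : x ^ 2 + y ^ 2 + s ^ 2 + t ^ 2 ≤ 1 / 2) :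
    ∃ e : ℚ, (e = 1 ∨ e = -1) ∧ (Nf (x - e) y s t ≤ 1 ∨ Nf x (y - e) s t ≤ 1 ∨
      Nf x y (s - e) t ≤ 1 ∨ Nf x y s (t - e) ≤ 1) := by
  by_contra hcon
  have hsq : ∀ e : ℚ, (e = 1 ∨ e = -1) → e ^ 2 = 1 := by rintro e (rfl | rfl) <;> norm_num
  have aux : ∃ m : ℚ, 0 ≤ m ∧ x ^ 2 + y ^ 2 + s ^ 2 + t ^ 2 ≤ 4 * m ^ 2 ∧
      (m = |x| ∨ m = |y| ∨ m = |s| ∨ m = |t|) := by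
    refine ⟨max (max |x| |y|) (max |s| |t|), by positivity, ?_, ?_⟩
    · set m := max (max |x| |y|) (max |s| |t|)
      have h1 : |x| ≤ m := le_trans (le_max_left _ _) (le_max_left _ _)
      have h2 : |y| ≤ m := le_trans (le_max_right _ _) (le_max_left _ _)
      have h3 : |s| ≤ m := le_trans (le_max_left _ _) (le_max_right _ _)
      have h4 : |t| ≤ m := le_trans (le_max_right _ _) (le_max_right _ _)
      have := sq_le_sq' (by linarith [abs_nonneg x]) h1
      have := sq_le_sq' (by linarith [abs_nonneg y]) h2
      have := sq_le_sq' (by linarith [abs_nonneg s]) h3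
      have := sq_le_sq' (by linarith [abs_nonneg t]) h4
      simp only [sq_abs] at *
      linarith
    · grind
  obtain ⟨m, hm0, hm4, hm⟩ := aux
  apply hcon
  by_cases hb : x ^ 2 + y ^ 2 + s ^ 2 + t ^ 2 ≤ 5877 / 100000
  · exact local_min x y s t hb
  have hd : 1 + (x ^ 2 + y ^ 2 + s ^ 2 + t ^ 2) - 2 * m ≤ 8164 / 10000 := by
    by_contra! hc
    exact hb (small_m _ m hm0 h hm4 hc)
  rcases hm with hm | hm | hm | hm
  · obtain ⟨e, he, hex⟩ := exists_sign x
    refine ⟨e, he, Or.inl (Nf_le_of _ _ _ _ ?_)⟩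
    nlinarith [hsq e he]
  · obtain ⟨e, he, hex⟩ := exists_sign y
    refine ⟨e, he, Or.inr (Or.inl (Nf_le_of _ _ _ _ ?_))⟩
    nlinarith [hsq e he]
  · obtain ⟨e, he, hex⟩ := exists_sign s
    refine ⟨e, he, Or.inr (Or.inr (Or.inl (Nf_le_of _ _ _ _ ?_)))⟩
    nlinarith [hsq e he]
  · obtain ⟨e, he, hex⟩ := exists_sign t
    refine ⟨e, he, Or.inr (Or.inr (Or.inr (Nf_le_of _ _ _ _ ?_)))⟩
    nlinarith [hsq e he]

/-- Covering: every rational 4-vector is within squared distance 1/2 of an integral or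
half-integral vector. -/
theorem cover (x y s t : ℚ) : ∃ a b c d : ℤ,
    (x - a) ^ 2 + (y - b) ^ 2 + (s - c) ^ 2 + (t - d) ^ 2 ≤ 1 / 2 ∨
    (x - a - 1 / 2) ^ 2 + (y - b - 1 / 2) ^ 2 + (s - c - 1 / 2) ^ 2 + (t - d - 1 / 2) ^ 2
      ≤ 1 / 2 := by
  have one : ∀ z : ℚ, ∃ a b : ℤ, (z - a) ^ 2 + (z - b - 1 / 2) ^ 2 ≤ 1 / 4 := by
    intro z
    have h := abs_sub_round z
    rw [abs_le] at h
    rcases le_total 0 (z - round z) with h0 | h0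
    · exact ⟨round z, round z, by nlinarith⟩
    · exact ⟨round z, round z - 1, by push_cast; nlinarith⟩
  obtain ⟨a, a', ha⟩ := one x
  obtain ⟨b, b', hb⟩ := one y
  obtain ⟨c, c', hc⟩ := one s
  obtain ⟨d, d', hd⟩ := one t
  by_cases h : (x - a) ^ 2 + (y - b) ^ 2 + (s - c) ^ 2 + (t - d) ^ 2 ≤ 1 / 2
  · exact ⟨a, b, c, d, Or.inl h⟩
  · exact ⟨a', b', c', d', Or.inr (by linarith)⟩

section Twelve

variable {L : Type*} [Field L] [NumberField L]

theorem zeta_four {ζ : L} (hζ : IsPrimitiveRoot ζ 12) : ζ ^ 4 = ζ ^ 2 - 1 := by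
  have h12 : ζ ^ 12 = 1 := hζ.pow_eq_one
  have h6 : ζ ^ 6 ≠ 1 := hζ.pow_ne_one_of_pos_of_lt (by norm_num) (by norm_num)
  have h4 : ζ ^ 4 ≠ 1 := hζ.pow_ne_one_of_pos_of_lt (by norm_num) (by norm_num)
  have a : (ζ ^ 6 - 1) * (ζ ^ 6 + 1) = 0 := by linear_combination h12
  have b : ζ ^ 6 + 1 = 0 := (mul_eq_zero.mp a).resolve_left (sub_ne_zero.mpr h6)
  have c : (ζ ^ 2 + 1) * (ζ ^ 4 - ζ ^ 2 + 1) = 0 := by linear_combination b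
  have d : ζ ^ 2 + 1 ≠ 0 := by
    intro hd
    apply h4
    linear_combination (ζ ^ 2 - 1) * hd
  linear_combination (mul_eq_zero.mp c).resolve_left d

theorem basisL {ζ : L} (hζ : IsPrimitiveRoot ζ 12) (hL : Module.finrank ℚ L = 4) :
    ∃ b : Module.Basis (Fin 4) ℚ L, ⇑b = ![1, ζ, ζ ^ 2, ζ ^ 3] := by
  have hdeg : (minpoly ℚ ζ).natDegree = 4 := by
    rw [← Polynomial.cyclotomic_eq_minpoly_rat hζ (by norm_num), Polynomial.natDegree_cyclotomic]
    decide
  have hli : LinearIndependent ℚ ![1, ζ, ζ ^ 2, ζ ^ 3] := by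
    have h := linearIndependent_pow (K := ℚ) ζ
    rw [hdeg] at h
    have hfun : ![1, ζ, ζ ^ 2, ζ ^ 3] = fun i : Fin 4 => ζ ^ (i : ℕ) := by
      ext i
      fin_cases i <;> simp
    rw [hfun]
    exact h
  exact ⟨basisOfLinearIndependentOfCardEqFinrank hli (by simp [hL]), by simp⟩

/-- The element with coordinates `x, y, s, t` with respect to `1, i, u, iu`, where `i = ζ³` and
`u = ζ - ζ²`. -/
def vec (ζ : L) (x y s t : ℚ) : L := x + y * ζ ^ 3 + (s + t * ζ ^ 3) * (ζ - ζ ^ 2)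

theorem norm_vec {ζ : L} (hζ : IsPrimitiveRoot ζ 12) (hL : Module.finrank ℚ L = 4)
    (x y s t : ℚ) : Algebra.norm ℚ (vec ζ x y s t) = Nf x y s t := by
  obtain ⟨b, hb⟩ := basisL hζ hL
  have h4 := zeta_four hζ
  obtain ⟨c0, h0⟩ : ∃ c, c = x - t := ⟨_, rfl⟩
  obtain ⟨c1, h1⟩ : ∃ c, c = s + t := ⟨_, rfl⟩
  obtain ⟨c2, h2⟩ : ∃ c, c = t - s := ⟨_, rfl⟩
  obtain ⟨c3, h3⟩ : ∃ c, c = y - t := ⟨_, rfl⟩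
  have hv : vec ζ x y s t = c0 + c1 * ζ + c2 * ζ ^ 2 + c3 * ζ ^ 3 := by
    unfold vec
    subst h0 h1 h2 h3
    push_cast
    linear_combination ((t : L) * (1 - ζ)) * h4
  have hmat : Algebra.lmul ℚ L (vec ζ x y s t) = Matrix.toLin b b
      !![c0, -c3, -c2, -c1 - c3; c1, c0, -c3, -c2; c2, c1 + c3, c0 + c2, c1;
        c3, c2, c1 + c3, c0 + c2] := by
    apply b.ext
    intro j
    rw [Matrix.toLin_self, hv]
    fin_cases j <;> simp [hb, Fin.sum_univ_four, Algebra.smul_def]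
    · linear_combination (c3 : L) * h4
    · linear_combination ((c2 : L) + c3 * ζ) * h4
    · linear_combination ((c1 : L) + c2 * ζ + c3 * (ζ ^ 2 + 1)) * h4
  rw [Algebra.norm_apply]
  change LinearMap.det (Algebra.lmul ℚ L (vec ζ x y s t)) = _
  rw [hmat, LinearMap.det_toLin, Matrix.det_succ_row_zero]
  simp [Fin.sum_univ_four, Matrix.det_fin_three, Fin.succAbove, Matrix.submatrix]
  subst h0 h1 h2 h3
  unfold Nf Fre Fim
  ring

theorem exists_vec {ζ : L} (hζ : IsPrimitiveRoot ζ 12) (hL : Module.finrank ℚ L = 4) (ξ : L) :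
    ∃ x y s t : ℚ, ξ = vec ζ x y s t := by
  obtain ⟨b, hb⟩ := basisL hζ hL
  have h4 := zeta_four hζ
  obtain ⟨c, hc⟩ : ∃ c : Fin 4 → ℚ, ξ = c 0 + c 1 * ζ + c 2 * ζ ^ 2 + c 3 * ζ ^ 3 := by
    refine ⟨b.repr ξ, ?_⟩
    conv_lhs => rw [← b.sum_repr ξ]
    simp [hb, Fin.sum_univ_four, Algebra.smul_def]
  refine ⟨c 0 + (c 1 + c 2) / 2, c 3 + (c 1 + c 2) / 2, (c 1 - c 2) / 2, (c 1 + c 2) / 2, ?_⟩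
  rw [hc]
  unfold vec
  push_cast
  linear_combination (-((c 1 + c 2 : L) / 2) * (1 - ζ)) * h4

theorem finish {ζ : L} (hζ : IsPrimitiveRoot ζ 12) (hL : Module.finrank ℚ L = 4)
    (z : 𝓞 L) (hz : algebraMap (𝓞 L) L z = ζ) (ξ : L) (k : ℕ) (β : 𝓞 L) (x y s t : ℚ)
    (h : (1 + ζ ^ 3) * (ζ ^ k * ξ) = (1 + ζ ^ 3) * algebraMap (𝓞 L) L β + vec ζ x y s t)
    (hN : Nf x y s t ≤ 1) :
    ∃ η : 𝓞 L, |Algebra.norm ℚ (ξ - (η : L))| ≤ 1 / 4 := by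
  have h4 := zeta_four hζ
  have h12 : ζ ^ k * ζ ^ (11 * k) = 1 := by
    rw [← pow_add, show k + 11 * k = 12 * k by ring, pow_mul, hζ.pow_eq_one, one_pow]
  refine ⟨z ^ (11 * k) * β, ?_⟩
  have e : (1 + ζ ^ 3) * (ζ ^ k * (ξ - ((z ^ (11 * k) * β : 𝓞 L) : L))) = vec ζ x y s t := by
    simp only [map_mul, map_pow, hz]
    linear_combination h - (1 + ζ ^ 3) * algebraMap (𝓞 L) L β * h12
  have n1 : Algebra.norm ℚ (1 + ζ ^ 3) = 4 := by
    have := norm_vec hζ hL 1 1 0 0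
    have e1 : vec ζ 1 1 0 0 = 1 + ζ ^ 3 := by unfold vec; push_cast; ring
    rw [e1] at this
    rw [this]; norm_num [Nf, Fre, Fim]
  have n2 : Algebra.norm ℚ ζ = 1 := by
    have := norm_vec hζ hL (1 / 2) (1 / 2) (1 / 2) (1 / 2)
    have e1 : vec ζ (1 / 2) (1 / 2) (1 / 2) (1 / 2) = ζ := by
      unfold vec; push_cast; linear_combination (1 / 2 * (1 - ζ)) * h4
    rw [e1] at this
    rw [this]; norm_num [Nf, Fre, Fim]
  have e2 := congrArg (Algebra.norm ℚ) e
  rw [map_mul, map_mul, map_pow, n1, n2, one_pow, one_mul, norm_vec hζ hL] at e2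
  have h0 : 0 ≤ Nf x y s t := by unfold Nf; positivity
  rw [abs_le]
  constructor <;> linarith

theorem hole {ζ : L} (hζ : IsPrimitiveRoot ζ 12) (hL : Module.finrank ℚ L = 4)
    (z : 𝓞 L) (hz : algebraMap (𝓞 L) L z = ζ) (ξ : L) (k : ℕ) (β : 𝓞 L) (x y s t : ℚ)
    (h : (1 + ζ ^ 3) * (ζ ^ k * ξ) = 1 + (1 + ζ ^ 3) * algebraMap (𝓞 L) L β + vec ζ x y s t)
    (hE : x ^ 2 + y ^ 2 + s ^ 2 + t ^ 2 ≤ 1 / 2) :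
    ∃ η : 𝓞 L, |Algebra.norm ℚ (ξ - (η : L))| ≤ 1 / 4 := by
  have h4 := zeta_four hζ
  obtain ⟨e, he, hm⟩ := hole_min x y s t hE
  rcases hm with hm | hm | hm | hm <;> rcases he with rfl | rfl
  · refine finish hζ hL z hz ξ k (β + (1 - z ^ 3)) _ _ _ _ ?_ hm
    simp only [map_add, map_sub, map_mul, map_pow, map_one, hz, h, vec]
    push_cast
    grind
  · refine finish hζ hL z hz ξ k β _ _ _ _ ?_ hm
    simp only [h, vec]
    push_cast
    grind
  · refine finish hζ hL z hz ξ k (β + 1) _ _ _ _ ?_ hm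
    simp only [map_add, map_sub, map_mul, map_pow, map_one, hz, h, vec]
    push_cast
    grind
  · refine finish hζ hL z hz ξ k (β - z ^ 3) _ _ _ _ ?_ hm
    simp only [map_add, map_sub, map_mul, map_pow, map_one, hz, h, vec]
    push_cast
    grind
  · refine finish hζ hL z hz ξ k (β + (1 - z ^ 3 + (z ^ 3 - z ^ 2))) _ _ _ _ ?_ hm
    simp only [map_add, map_sub, map_mul, map_pow, map_one, hz, h, vec]
    push_cast
    grind
  · refine finish hζ hL z hz ξ k (β - (z ^ 3 - z ^ 2)) _ _ _ _ ?_ hm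
    simp only [map_add, map_sub, map_mul, map_pow, map_one, hz, h, vec]
    push_cast
    grind
  · refine finish hζ hL z hz ξ k (β + (1 + z ^ 3 * (z ^ 3 - z ^ 2))) _ _ _ _ ?_ hm
    simp only [map_add, map_sub, map_mul, map_pow, map_one, hz, h, vec]
    push_cast
    grind
  · refine finish hζ hL z hz ξ k (β - z ^ 3 - z ^ 3 * (z ^ 3 - z ^ 2)) _ _ _ _ ?_ hm
    simp only [map_add, map_sub, map_mul, map_pow, map_one, hz, h, vec]
    push_cast
    grind

/-- An integral vector is congruent to `0` or `1` modulo `1 + i`. -/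
theorem parity {ζ : L} (hζ : IsPrimitiveRoot ζ 12)
    (z : 𝓞 L) (hz : algebraMap (𝓞 L) L z = ζ) (a b c d : ℤ) :
    ∃ β : 𝓞 L, vec ζ a b c d = (1 + ζ ^ 3) * algebraMap (𝓞 L) L β ∨
      vec ζ a b c d = 1 + (1 + ζ ^ 3) * algebraMap (𝓞 L) L β := by
  have h4 := zeta_four hζ
  rcases Int.even_or_odd' (a + b + c + d) with ⟨k, hk | hk⟩
  · obtain rfl : a = 2 * k - b - c - d := by linarith
    refine ⟨k * (1 - z ^ 3) + b * z ^ 3 + (c + d) * (z ^ 3 - z ^ 2)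
      + d * (z ^ 3 * (z - z ^ 2)), Or.inl ?_⟩
    simp only [map_add, map_sub, map_mul, map_pow, map_one, map_intCast, hz, vec]
    push_cast
    grind
  · obtain rfl : a = 2 * k + 1 - b - c - d := by linarith
    refine ⟨k * (1 - z ^ 3) + b * z ^ 3 + (c + d) * (z ^ 3 - z ^ 2)
      + d * (z ^ 3 * (z - z ^ 2)), Or.inr ?_⟩
    simp only [map_add, map_sub, map_mul, map_pow, map_one, map_intCast, hz, vec]
    push_cast
    grind

theorem zeta_mul_vec {ζ : L} (hζ : IsPrimitiveRoot ζ 12) (x y s t : ℚ) :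
    ζ * vec ζ x y s t = vec ζ ((x - y + s + t) / 2) ((x + y - s + t) / 2)
      ((x - y - s - t) / 2) ((x + y + s - t) / 2) := by
  have h4 := zeta_four hζ
  unfold vec
  push_cast
  grind

theorem zeta_isometry {ζ : L} (hζ : IsPrimitiveRoot ζ 12) (x y s t : ℚ) :
    ∃ x' y' s' t' : ℚ, ζ * vec ζ x y s t = vec ζ x' y' s' t' ∧
      x' ^ 2 + y' ^ 2 + s' ^ 2 + t' ^ 2 = x ^ 2 + y ^ 2 + s ^ 2 + t ^ 2 :=
  ⟨_, _, _, _, zeta_mul_vec hζ x y s t, by ring⟩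

theorem upperL {ζ : L} (hζ : IsPrimitiveRoot ζ 12) (hL : Module.finrank ℚ L = 4)
    (z : 𝓞 L) (hz : algebraMap (𝓞 L) L z = ζ) (ξ : L) :
    ∃ η : 𝓞 L, |Algebra.norm ℚ (ξ - (η : L))| ≤ 1 / 4 := by
  have h4 := zeta_four hζ
  have hid : ζ ^ 2 + ζ = 1 + (1 + ζ ^ 3) * (ζ ^ 3 - ζ ^ 2 + ζ ^ 2 * (1 - ζ ^ 3)) := by
    clear hz hζ
    grind
  obtain ⟨x, y, s, t, hv⟩ := exists_vec hζ hL ((1 + ζ ^ 3) * ξ)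
  obtain ⟨a, b, c, d, h | h⟩ := cover x y s t
  · have e : vec ζ x y s t = vec ζ a b c d + vec ζ (x - a) (y - b) (s - c) (t - d) := by
      unfold vec; push_cast; ring
    obtain ⟨β, hβ | hβ⟩ := parity hζ z hz a b c d
    · refine finish hζ hL z hz ξ 0 β _ _ _ _ ?_ (Nf_le_of _ _ _ _ (h.trans (by norm_num)))
      rw [pow_zero, one_mul, hv, e, hβ]
    · refine hole hζ hL z hz ξ 0 β _ _ _ _ ?_ h
      rw [pow_zero, one_mul, hv, e, hβ]
  · have e : vec ζ x y s t = ζ + vec ζ a b c d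
        + vec ζ (x - a - 1 / 2) (y - b - 1 / 2) (s - c - 1 / 2) (t - d - 1 / 2) := by
      unfold vec; push_cast; linear_combination (1 / 2 * (1 - ζ)) * h4
    rw [e] at hv
    obtain ⟨x1, y1, s1, t1, hm, hE1⟩ := zeta_isometry hζ
      (x - a - 1 / 2) (y - b - 1 / 2) (s - c - 1 / 2) (t - d - 1 / 2)
    obtain ⟨x2, y2, s2, t2, hm2, hE2⟩ := zeta_isometry hζ x1 y1 s1 t1
    rw [← hm] at hm2
    obtain ⟨β, hβ | hβ⟩ := parity hζ z hz a b c d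
    · refine hole hζ hL z hz ξ 2 (z ^ 3 + z ^ 2 * β) x2 y2 s2 t2 ?_ ?_
      · rw [← hm2]
        simp only [map_add, map_mul, map_pow, hz]
        rw [hβ] at hv
        linear_combination ζ ^ 2 * hv - (ζ ^ 2 + 1) * h4
      · exact (hE2.trans hE1).trans_le h
    · refine hole hζ hL z hz ξ 1 (z ^ 3 - z ^ 2 + z ^ 2 * (1 - z ^ 3) + z * β) x1 y1 s1 t1 ?_ ?_
      · rw [← hm]
        simp only [map_add, map_sub, map_mul, map_pow, map_one, hz]
        rw [hβ] at hv
        linear_combination ζ * hv + hid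
      · exact hE1.trans_le h

theorem eucL {ζ : L} (hζ : IsPrimitiveRoot ζ 12) (hL : Module.finrank ℚ L = 4) :
    eucMin L = 1 / 4 := by
  obtain ⟨z, hz⟩ : ∃ z : 𝓞 L, algebraMap (𝓞 L) L z = ζ :=
    ⟨⟨ζ, hζ.isIntegral (by norm_num)⟩, rfl⟩
  have := eucMin_eq_of (F := L) (1 / 4) (upperL hζ hL z hz) ?_
  · rw [this]; norm_num
  · refine lower_bound (1 + z ^ 3) 4 (by norm_num) ?_
    have e1 : ((1 + z ^ 3 : 𝓞 L) : L) = vec ζ 1 1 0 0 := by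
      simp only [map_add, map_pow, map_one, hz, vec]; push_cast; ring
    rw [e1, norm_vec hζ hL]
    norm_num [Nf, Fre, Fim]

end Twelve

theorem eucMin_Q_zeta12_and_Q_sqrt3
    {L K : Type*} [Field L] [Field K] [NumberField L] [NumberField K]
    (ζ : L) (hζ : IsPrimitiveRoot ζ 12) (hL : Module.finrank ℚ L = 4)
    (θ : K) (hθ : θ ^ 2 = 3) (hK : Module.finrank ℚ K = 2) :
    eucMin K = 1 / 2 ∧ eucMin L = 1 / 4 ∧ eucMin L = (eucMin K) ^ 2 := by
  refine ⟨eucK θ hθ hK, eucL hζ hL, ?_⟩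
  rw [eucK θ hθ hK, eucL hζ hL]
  norm_num
end

section
/- The field K = ℚ(√(−2+√2)) (the cyclic quartic field of conductor 16) is not norm-Euclidean. -/
open NumberField

def IsNormEuclidean (K : Type*) [Field K] [NumberField K] : Prop :=
  ∀ ξ : K, ∃ η : 𝓞 K, |Algebra.norm ℚ (ξ - (η : K))| < 1

namespace Cond16

open Polynomial

/-- The arithmetic heart: the relevant norm form never takes values below 16 in absolute value. -/
lemma arith (p q r s A B : ℤ) (hp : p % 2 = 1) (hq : q % 2 = 0) (hr : r % 2 = 0) (hs : s % 2 = 1)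
    (hA : A = p ^ 2 + 2 * q ^ 2 + 2 * r ^ 2 + 4 * s ^ 2 - 4 * r * s)
    (hB : B = 2 * p * q + 4 * r * s - r ^ 2 - 2 * s ^ 2) :
    16 ≤ |A ^ 2 - 2 * B ^ 2| := by
  have hApos : 0 < A := by
    have : p ≠ 0 := by rintro rfl; simp at hp
    have : 0 < p ^ 2 := by positivity
    nlinarith [sq_nonneg q, sq_nonneg (r - s), sq_nonneg s]
  obtain ⟨P, rfl⟩ : ∃ P, p = 2 * P + 1 := ⟨p / 2, by omega⟩
  obtain ⟨Q, rfl⟩ : ∃ Q, q = 2 * Q := ⟨q / 2, by omega⟩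
  obtain ⟨R, rfl⟩ : ∃ R, r = 2 * R := ⟨r / 2, by omega⟩
  obtain ⟨S, rfl⟩ : ∃ S, s = 2 * S + 1 := ⟨s / 2, by omega⟩
  obtain ⟨k, hk⟩ : ∃ k, A = 8 * k + 5 := by
    obtain ⟨m, hm⟩ : ∃ m, P * (P + 1) = 2 * m := (Int.even_mul_succ_self P).two_dvd
    exact ⟨m + Q ^ 2 + R ^ 2 + 2 * S ^ 2 + 2 * S - R * (2 * S + 1), by
      rw [hA]; linear_combination 4 * hm⟩
  obtain ⟨l, hl⟩ : ∃ l, B = 4 * l + 2 :=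
    ⟨(2 * P + 1) * Q + 2 * R * (2 * S + 1) - R ^ 2 - 2 * S ^ 2 - 2 * S - 1, by rw [hB]; ring⟩
  clear hA hB
  subst hk hl
  by_contra! hlt
  rw [abs_lt] at hlt
  have hform : (8 * k + 5) ^ 2 - 2 * (4 * l + 2) ^ 2
      = 16 * (4 * k ^ 2 + 5 * k + 1 - 2 * l ^ 2 - 2 * l) + 1 := by ring
  rw [hform] at hlt
  have h01 : 4 * k ^ 2 + 5 * k + 1 - 2 * l ^ 2 - 2 * l = 0 ∨
      4 * k ^ 2 + 5 * k + 1 - 2 * l ^ 2 - 2 * l = -1 := by omega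
  rcases h01 with h | h
  · -- norm 1
    have hk0 : 0 ≤ k := by omega
    have hmul : (4 * k + 3) * (2 * k + 1) = (2 * l + 1) ^ 2 := by linear_combination 2 * h
    have hcop : IsCoprime (4 * k + 3) (2 * k + 1) := ⟨1, -2, by ring⟩
    obtain ⟨a, ha⟩ := Int.sq_of_isCoprime hcop hmul
    have h3 : (4 * k + 3) % 4 = 3 := by omega
    rcases ha with ha | ha
    · rcases Int.even_or_odd' a with ⟨c, rfl | rfl⟩
      · ring_nf at ha; omega
      · ring_nf at ha; omega
    · nlinarith [sq_nonneg a]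
  · -- norm -15
    have h5 : (8 * k + 5) ^ 2 - 2 * (4 * l + 2) ^ 2 = -15 := by rw [hform, h]; norm_num
    generalize 8 * k + 5 = A at h5
    generalize 4 * l + 2 = B at h5
    have hA5 : A % 5 = 0 ∧ B % 5 = 0 := by
      have hm : (A ^ 2 - 2 * B ^ 2) % 5 = 0 := by rw [h5]; norm_num
      have hA : A % 5 = 0 ∨ A % 5 = 1 ∨ A % 5 = 2 ∨ A % 5 = 3 ∨ A % 5 = 4 := by omega
      have hB : B % 5 = 0 ∨ B % 5 = 1 ∨ B % 5 = 2 ∨ B % 5 = 3 ∨ B % 5 = 4 := by omega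
      rcases hA with hA | hA | hA | hA | hA <;> rcases hB with hB | hB | hB | hB | hB <;>
        simp [Int.sub_emod, Int.mul_emod, pow_two, hA, hB] at hm ⊢
    obtain ⟨a, rfl⟩ : ∃ a, A = 5 * a := ⟨A / 5, by omega⟩
    obtain ⟨b, rfl⟩ : ∃ b, B = 5 * b := ⟨B / 5, by omega⟩
    ring_nf at h5
    omega

noncomputable def f : ℤ[X] := X ^ 4 + 4 * X ^ 2 + 2

lemma f_natDegree : f.natDegree = 4 := by unfold f; compute_degree!

lemma f_monic : f.Monic := by unfold f; monicity!

lemma f_eis : f.IsEisensteinAt (Ideal.span {(2 : ℤ)}) := by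
  refine f_monic.isEisensteinAt_of_mem_of_notMem ?_ ?_ ?_
  · rw [Ne, Ideal.span_singleton_eq_top, Int.isUnit_iff]; norm_num
  · intro n hn
    rw [f_natDegree] at hn
    rw [Ideal.mem_span_singleton]
    have h4 : (4 : ℤ[X]) = C 4 := rfl
    have h2 : (2 : ℤ[X]) = C 2 := rfl
    unfold f
    rw [h4, h2]
    interval_cases n <;> simp [coeff_X_pow]
  · have h4 : (4 : ℤ[X]) = C 4 := rfl
    have h2 : (2 : ℤ[X]) = C 2 := rfl
    unfold f
    rw [h4, h2, Ideal.span_singleton_pow, Ideal.mem_span_singleton]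
    simp [coeff_X_pow]

lemma f_irred : Irreducible f :=
  f_eis.irreducible ((Ideal.span_singleton_prime (by norm_num)).2 Int.prime_two)
    f_monic.isPrimitive (by rw [f_natDegree]; norm_num)

variable {K : Type*} [Field K] [NumberField K]

lemma minpolyQ (θ : K) (hθ : (θ ^ 2 + 2) ^ 2 = 2) :
    minpoly ℚ θ = f.map (algebraMap ℤ ℚ) := by
  refine (minpoly.eq_of_irreducible_of_monic
    (f_monic.irreducible_iff_irreducible_map_fraction_map.1 f_irred) ?_ (f_monic.map _)).symm
  rw [aeval_map_algebraMap]
  simp only [f, map_add, map_mul, map_pow, aeval_X, map_ofNat]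
  linear_combination hθ

lemma integralθ {K : Type*} [Field K] (θ : K) (hθ : (θ ^ 2 + 2) ^ 2 = 2) : IsIntegral ℤ θ := by
  refine ⟨f, f_monic, ?_⟩
  rw [← aeval_def]
  simp only [f, map_add, map_mul, map_pow, aeval_X, map_ofNat]
  linear_combination hθ

lemma minpolyZ (θ : K) (hθ : (θ ^ 2 + 2) ^ 2 = 2) : minpoly ℤ θ = f := by
  apply Polynomial.map_injective (algebraMap ℤ ℚ) (algebraMap ℤ ℚ).injective_int
  rw [← minpolyQ θ hθ, minpoly.isIntegrallyClosed_eq_field_fractions' ℚ (integralθ θ hθ)]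

lemma exists_pb (θ : K) (hθ : (θ ^ 2 + 2) ^ 2 = 2) (h4 : Module.finrank ℚ K = 4) :
    ∃ b : Module.Basis (Fin 4) ℚ K, ∀ i, b i = θ ^ (i : ℕ) := by
  have hdeg : (minpoly ℚ θ).natDegree = 4 := by
    rw [minpolyQ θ hθ, f_monic.natDegree_map, f_natDegree]
  have hli : LinearIndependent ℚ (fun i : Fin 4 => θ ^ (i : ℕ)) := by
    have := linearIndependent_pow (K := ℚ) θ
    rw [hdeg] at this
    exact this
  exact ⟨basisOfLinearIndependentOfCardEqFinrank hli (by simp [h4]), fun i => by simp⟩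

lemma norm_formula (θ : K) (hθ : (θ ^ 2 + 2) ^ 2 = 2) (h4 : Module.finrank ℚ K = 4)
    (a b c d : ℚ) :
    Algebra.norm ℚ (algebraMap ℚ K a + algebraMap ℚ K b * θ + algebraMap ℚ K c * θ ^ 2
      + algebraMap ℚ K d * θ ^ 3) =
    ((a - 2 * c) ^ 2 + 2 * c ^ 2 + 2 * (b - 2 * d) ^ 2 + 4 * d ^ 2 - 4 * (b - 2 * d) * d) ^ 2
    - 2 * (2 * (a - 2 * c) * c + 4 * (b - 2 * d) * d - (b - 2 * d) ^ 2 - 2 * d ^ 2) ^ 2 := by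
  obtain ⟨B, hB⟩ := exists_pb θ hθ h4
  set z := algebraMap ℚ K a + algebraMap ℚ K b * θ + algebraMap ℚ K c * θ ^ 2
      + algebraMap ℚ K d * θ ^ 3 with hz
  let M : Matrix (Fin 4) (Fin 4) ℚ :=
    !![a, -2*d, -2*c, -2*(b-4*d);
       b, a, -2*d, -2*c;
       c, b-4*d, a-4*c, -2*d-4*(b-4*d);
       d, c, b-4*d, a-4*c]
  have hM : Algebra.leftMulMatrix B z = M := by
    rw [Algebra.leftMulMatrix_apply]
    apply (Matrix.toLin B B).injective
    rw [Matrix.toLin_toMatrix]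
    apply B.ext
    intro j
    rw [Matrix.toLin_self]
    fin_cases j <;>
      simp [Fin.sum_univ_four, hB, M, Algebra.smul_def, -eq_ratCast] <;>
      simp only [hz, map_ofNat]
    · linear_combination (algebraMap ℚ K d) * hθ
    · linear_combination (algebraMap ℚ K c + algebraMap ℚ K d * θ) * hθ
    · linear_combination (algebraMap ℚ K b + algebraMap ℚ K c * θ
        + algebraMap ℚ K d * (θ ^ 2 - 4)) * hθ
  rw [Algebra.norm_eq_matrix_det B, hM]
  simp [M, Matrix.det_succ_row_zero, Fin.sum_univ_succ, Fin.succAbove]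
  ring

lemma integral_mem (θ : K) (hθ : (θ ^ 2 + 2) ^ 2 = 2) (h4 : Module.finrank ℚ K = 4)
    (z : K) (hz : IsIntegral ℤ z) : z ∈ Algebra.adjoin ℤ ({θ} : Set K) := by
  obtain ⟨B, hB⟩ := exists_pb θ hθ h4
  let pb : PowerBasis ℚ K := ⟨θ, 4, B, hB⟩
  have hint : IsIntegral ℤ pb.gen := integralθ θ hθ
  have H := Algebra.discr_mul_isIntegral_mem_adjoin ℚ (B := pb) hint hz
  have hd : Algebra.discr ℚ pb.basis = 2048 := by
    rw [Algebra.discr_powerBasis_eq_norm, h4]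
    have : aeval pb.gen (derivative (minpoly ℚ pb.gen)) =
        algebraMap ℚ K 0 + algebraMap ℚ K 8 * θ + algebraMap ℚ K 0 * θ ^ 2
          + algebraMap ℚ K 4 * θ ^ 3 := by
      change aeval θ (derivative (minpoly ℚ θ)) = _
      rw [minpolyQ θ hθ]
      have h4 : (4 : ℚ[X]) = C 4 := rfl
      have h2 : (2 : ℚ[X]) = C 2 := rfl
      simp [f, h4, h2]
      ring
    rw [this, norm_formula θ hθ h4]
    norm_num
  refine mem_adjoin_of_smul_prime_pow_smul_of_minpoly_isEisensteinAt (K := ℚ) (B := pb)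
    (p := (2 : ℤ)) (n := 11) Int.prime_two hint hz ?_ ?_
  · rw [hd] at H
    convert H using 1
    simp [Algebra.smul_def]
  · change (minpoly ℤ θ).IsEisensteinAt _
    rw [minpolyZ θ hθ]
    exact f_eis

lemma integral_coords (θ : K) (hθ : (θ ^ 2 + 2) ^ 2 = 2) (h4 : Module.finrank ℚ K = 4)
    (z : K) (hz : IsIntegral ℤ z) :
    ∃ a b c d : ℤ, z = a + b * θ + c * θ ^ 2 + d * θ ^ 3 := by
  have h := integral_mem θ hθ h4 z hz
  clear hz
  induction h using Algebra.adjoin_induction with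
  | mem x hx => 
    rw [Set.mem_singleton_iff] at hx
    exact ⟨0, 1, 0, 0, by simp [hx]⟩
  | algebraMap r => exact ⟨r, 0, 0, 0, by simp⟩
  | add x y hx hy ihx ihy =>
    obtain ⟨a, b, c, d, rfl⟩ := ihx
    obtain ⟨a₁, b₁, c₁, d₁, rfl⟩ := ihy
    exact ⟨a + a₁, b + b₁, c + c₁, d + d₁, by push_cast; ring⟩
  | mul x y hx hy ihx ihy =>
    obtain ⟨a, b, c, d, rfl⟩ := ihx
    obtain ⟨a₁, b₁, c₁, d₁, rfl⟩ := ihy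
    refine ⟨a * a₁ - 2 * (b * d₁ + c * c₁ + d * b₁) + 8 * (d * d₁),
      a * b₁ + b * a₁ - 2 * (c * d₁ + d * c₁),
      a * c₁ + b * b₁ + c * a₁ - 4 * (b * d₁ + c * c₁ + d * b₁) + 14 * (d * d₁),
      a * d₁ + b * c₁ + c * b₁ + d * a₁ - 4 * (c * d₁ + d * c₁), ?_⟩
    push_cast
    linear_combination ((b * d₁ + c * c₁ + d * b₁ : K) + (c * d₁ + d * c₁) * θ
      + d * d₁ * (θ ^ 2 - 4)) * hθ

end Cond16

theorem conductor16_not_normEuclidean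
    {K : Type*} [Field K] [NumberField K]
    (θ : K) (hθ : (θ ^ 2 + 2) ^ 2 = 2) (h4 : Module.finrank ℚ K = 4) :
    ¬ IsNormEuclidean K := by
  intro h
  obtain ⟨η, hη⟩ := h (algebraMap ℚ K (1 / 2) + algebraMap ℚ K (1 / 2) * θ ^ 3)
  obtain ⟨a, b, c, d, he⟩ := Cond16.integral_coords θ hθ h4 (η : K) η.isIntegral_coe
  have hx : algebraMap ℚ K (1 / 2) + algebraMap ℚ K (1 / 2) * θ ^ 3 - (η : K) =
      algebraMap ℚ K (1 / 2 - a) + algebraMap ℚ K (-b) * θ + algebraMap ℚ K (-c) * θ ^ 2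
        + algebraMap ℚ K (1 / 2 - d) * θ ^ 3 := by
    rw [he]
    simp only [map_sub, map_neg, map_intCast]
    ring
  rw [hx, Cond16.norm_formula θ hθ h4] at hη
  have key := Cond16.arith (1 - 2 * a + 4 * c) (-2 * c) (-2 * b - 2 * (1 - 2 * d)) (1 - 2 * d) _ _
    (by omega) (by omega) (by omega) (by omega) rfl rfl
  rw [← Int.cast_le (R := ℚ)] at key
  push_cast at key
  rw [abs_lt] at hη
  rcases le_abs.1 key with h1 | h1 <;> nlinarith [hη.1, hη.2]
end

section
/- The complex cyclic quartic number field of conductor 29 is not norm-Euclidean. -/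
open NumberField

def IsTotallyImaginary (K : Type*) [Field K] [NumberField K] : Prop :=
  ∀ φ : K →+* ℂ, ¬ ComplexEmbedding.IsReal φ

lemma inert_aux {L : Type*} [Field L] [NumberField L] [IsCyclotomicExtension {29} ℚ L]
    (p : ℕ) (hp : p.Prime) (hd : ¬ p ∣ 29) (ho : orderOf (p : ZMod 29) = 28) (y : 𝓞 L)
    (hy : p ∣ (Algebra.norm ℤ y).natAbs) : p ^ 28 ∣ (Algebra.norm ℤ y).natAbs := by
  have : Fact p.Prime := ⟨hp⟩
  rw [← Ideal.absNorm_span_singleton] at hy ⊢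
  obtain ⟨P, hP, hPu, hPd⟩ := Ideal.exists_isMaximal_dvd_of_dvd_absNorm' hp _ hy
  have : P.LiesOver (Ideal.span {(p : ℤ)}) := ⟨hPu.symm⟩
  have h1 := IsCyclotomicExtension.Rat.inertiaDeg_eq_of_not_dvd p L P (m := 29) hd
  have h2 := Ideal.pow_inertiaDeg p P
  rw [h1, ho] at h2
  rw [h2]
  exact Ideal.absNorm_dvd_absNorm_of_le (Ideal.dvd_iff_le.mp hPd)

lemma order2 : orderOf ((2 : ℕ) : ZMod 29) = 28 := by
  rw [orderOf_eq_iff (by norm_num)]; decide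
lemma order3 : orderOf ((3 : ℕ) : ZMod 29) = 28 := by
  rw [orderOf_eq_iff (by norm_num)]; decide

lemma cong_aux {K L : Type*} [Field K] [NumberField K] [Field L] [NumberField L]
    [IsCyclotomicExtension {29} ℚ L] [Algebra K L] (h4 : Module.finrank ℚ K = 4)
    {ζ : L} (hζ : IsPrimitiveRoot ζ 29) (η : 𝓞 K) [IsGalois ℚ K] [IsGalois ℚ L]
    [IsGalois K L] :
    (29 : ℤ) ∣ Algebra.norm ℤ (6 - RingOfIntegers.norm K (hζ.toInteger - 1) * η) - 6 ^ 4 := by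
  have : Fact (Nat.Prime 29) := ⟨by norm_num⟩
  set π := RingOfIntegers.norm K (hζ.toInteger - 1)
  rw [show (29 : ℤ) = ((29 : ℕ) : ℤ) by rfl,
    ← IsCyclotomicExtension.Rat.zeta_sub_one_dvd_intCast_iff' 29 hζ]
  have hdv : hζ.toInteger - 1 ∣ algebraMap (𝓞 K) (𝓞 L) π := RingOfIntegers.dvd_norm K _
  have key : ∀ σ : K ≃ₐ[ℚ] K, ∃ w : 𝓞 L, algebraMap K L (σ ((6 - π * η : 𝓞 K) : K)) =
      ((6 - (hζ.toInteger - 1) * w : 𝓞 L) : L) := by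
    intro σ
    let τ : L ≃ₐ[ℚ] L := σ.liftNormal L
    let τ' : 𝓞 L →+* 𝓞 L := RingOfIntegers.mapRingHom τ
    have hτ : IsPrimitiveRoot (τ ζ) 29 := hζ.map_of_injective τ.injective
    have h1 : τ' (hζ.toInteger - 1) = hτ.toInteger - 1 := by
      rw [map_sub, map_one]; rfl
    have h2 : hζ.toInteger - 1 ∣ τ' (algebraMap (𝓞 K) (𝓞 L) (π * η)) := by
      refine (IsCyclotomicExtension.Rat.associated_sub_one_of_isPrimitiveRoot 29 hζ hτ).dvd.trans ?_
      rw [← h1]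
      refine map_dvd τ' ?_
      rw [map_mul]
      exact hdv.mul_right _
    obtain ⟨w, hw⟩ := h2
    refine ⟨w, ?_⟩
    rw [← hw, ← AlgEquiv.liftNormal_commutes]
    have e6 : algebraMap (𝓞 K) K 6 = 6 := map_ofNat _ 6
    have e6' : algebraMap (𝓞 L) L 6 = 6 := map_ofNat _ 6
    have h3 : algebraMap (𝓞 L) L (τ' (algebraMap (𝓞 K) (𝓞 L) (π * η))) =
      τ (algebraMap K L (algebraMap (𝓞 K) K (π * η))) := rfl
    rw [RingOfIntegers.coe_eq_algebraMap, RingOfIntegers.coe_eq_algebraMap,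
      map_sub, map_sub, map_sub, map_sub, h3, e6, e6', map_ofNat, map_ofNat]
  choose w hw using key
  have hN : ((Algebra.norm ℤ (6 - π * η) : ℤ) : 𝓞 L) =
      ∏ σ : K ≃ₐ[ℚ] K, (6 - (hζ.toInteger - 1) * w σ) := by
    apply RingOfIntegers.ext
    rw [RingOfIntegers.coe_eq_algebraMap, RingOfIntegers.coe_eq_algebraMap,
      map_prod (algebraMap (𝓞 L) L)]
    simp only [RingOfIntegers.coe_eq_algebraMap] at hw
    simp_rw [← hw]
    rw [← map_prod, ← Algebra.norm_eq_prod_automorphisms, ← Algebra.coe_norm_int]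
    simp
  rw [← Ideal.mem_span_singleton, ← Ideal.Quotient.eq_zero_iff_mem]
  rw [Int.cast_sub, hN, map_sub, map_prod]
  have hq : ∀ σ, Ideal.Quotient.mk (Ideal.span {hζ.toInteger - 1})
      (6 - (hζ.toInteger - 1) * w σ) = Ideal.Quotient.mk _ 6 := by
    intro σ
    rw [Ideal.Quotient.eq, Ideal.mem_span_singleton]
    exact ⟨- w σ, by ring⟩
  simp_rw [hq]
  rw [Finset.prod_const, Finset.card_univ, ← Nat.card_eq_fintype_card,
    IsGalois.card_aut_eq_finrank, h4, ← map_pow, ← map_sub]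
  rw [Int.cast_pow, Int.cast_ofNat, sub_self, map_zero]

lemma main_aux {K L : Type*} [Field K] [NumberField K] [Field L] [NumberField L]
    [IsCyclotomicExtension {29} ℚ L] [Algebra K L] (h4 : Module.finrank ℚ K = 4)
    (H : ∀ ξ : K, ∃ η : 𝓞 K, |Algebra.norm ℚ (ξ - (η : K))| < 1) : False := by
  have : Fact (Nat.Prime 29) := ⟨by norm_num⟩
  have : IsAbelianGalois ℚ L := IsCyclotomicExtension.isAbelianGalois {29} ℚ L
  have : IsAbelianGalois ℚ K := IsAbelianGalois.tower_bot ℚ K L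
  have : IsGalois K L := IsGalois.tower_top_of_isGalois ℚ K L
  have hζ := IsCyclotomicExtension.zeta_spec 29 ℚ L
  set ζ := IsCyclotomicExtension.zeta 29 ℚ L
  let π : 𝓞 K := RingOfIntegers.norm K (hζ.toInteger - 1)
  have hπ : Algebra.norm ℚ (π : K) = 29 := by
    have := hζ.norm_sub_one_of_prime_ne_two' (K := ℚ)
      (Polynomial.cyclotomic.irreducible_rat (by norm_num)) (by norm_num)
    rw [← Algebra.norm_norm (S := K)] at this
    exact this
  have hπ0 : (π : K) ≠ 0 := by
    intro h; rw [h] at hπ; simp at hπ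
  obtain ⟨η, hη⟩ := H (6 / π)
  let β : 𝓞 K := 6 - π * η
  have hβ : (β : K) = π * (6 / π - η) := by
    have e6 : algebraMap (𝓞 K) K 6 = 6 := map_ofNat _ 6
    simp only [β, map_sub, map_mul, e6]; field_simp
  have hb : |Algebra.norm ℤ β| < 29 := by
    have : |(Algebra.norm ℤ β : ℚ)| < 29 := by
      rw [Algebra.coe_norm_int, hβ, map_mul, hπ, abs_mul]
      norm_num; try linarith
    exact_mod_cast this
  have hc : (29 : ℤ) ∣ Algebra.norm ℤ β - 6 ^ 4 := cong_aux h4 hζ η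
  have h7 : Module.finrank K L = 7 := by
    have h := Module.finrank_mul_finrank ℚ K L
    rw [IsCyclotomicExtension.Rat.finrank 29 L, h4, Nat.totient_prime (by norm_num)] at h
    omega
  have hNL : Algebra.norm ℤ (algebraMap (𝓞 K) (𝓞 L) β) = (Algebra.norm ℤ β) ^ 7 := by
    have : ((Algebra.norm ℤ (algebraMap (𝓞 K) (𝓞 L) β) : ℤ) : ℚ) = (Algebra.norm ℤ β : ℤ) ^ 7 := by
      rw [Algebra.coe_norm_int, Algebra.coe_norm_int, ← Algebra.norm_norm (S := K), ← h7,
        ← map_pow, ← Algebra.norm_algebraMap]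
      rfl
    exact_mod_cast this
  have h2 := inert_aux 2 (by norm_num) (by norm_num) order2 (algebraMap (𝓞 K) (𝓞 L) β)
  have h3 := inert_aux 3 (by norm_num) (by norm_num) order3 (algebraMap (𝓞 K) (𝓞 L) β)
  rw [hNL] at h2 h3
  rw [abs_lt] at hb
  have : Algebra.norm ℤ β = 20 ∨ Algebra.norm ℤ β = -9 := by omega
  rcases this with h | h
  · rw [h] at h2; norm_num at h2
  · rw [h] at h3; norm_num at h3

/-- The complex (totally imaginary) cyclic quartic subfield of ℚ(ζ_29)
is not norm-Euclidean. -/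
theorem cyclic_quartic_conductor_29_not_normEuclidean
    {K : Type*} [Field K] [NumberField K]
    (him : IsTotallyImaginary K) (h4 : Module.finrank ℚ K = 4)
    (hsub : Nonempty (K →ₐ[ℚ] CyclotomicField 29 ℚ)) :
    ¬ IsNormEuclidean K := by
  intro H
  obtain ⟨f⟩ := hsub
  let : Algebra K (CyclotomicField 29 ℚ) := f.toRingHom.toAlgebra
  have : IsCyclotomicExtension {29} ℚ (CyclotomicField 29 ℚ) := by
    have h := CyclotomicField.isCyclotomicExtension 29 ℚ
    rwa [Subsingleton.elim (CyclotomicField.algebra 29 ℚ) DivisionRing.toRatAlgebra] at h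
  exact main_aux (L := CyclotomicField 29 ℚ) h4 H
end

section
/- The ring of integers R of K = ℚ(√−2, √−7) is not norm-Euclidean. -/
open NumberField

/-- The purely integral core: no element in the bad class mod 2 has norm `< 16`. -/
theorem core_int (p q r s : ℤ) (X Y : ℤ)
    (hX : X = (2*p)^2 - 2*(2*q+1)^2 + 2*((2*r+1)^2 - 2*(2*s+1)^2))
    (hY : Y = 2*(2*p)*(2*q+1) + (2*q+1)^2 + 2*(2*(2*r+1)*(2*s+1) + (2*s+1)^2))
    (h : X^2 + X*Y + 2*Y^2 < 16) : False := by
  have hY3 : Y ≤ 3 := by nlinarith [sq_nonneg (2*X+Y)]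
  have hY3' : -3 ≤ Y := by nlinarith [sq_nonneg (2*X+Y)]
  have hX7 : X ≤ 7 := by nlinarith
  have hX7' : -7 ≤ X := by nlinarith
  obtain ⟨e1, h1⟩ := Int.even_mul_succ_self q
  obtain ⟨e2, h2⟩ := Int.even_mul_succ_self r
  obtain ⟨e3, h3⟩ := Int.even_mul_succ_self s
  obtain ⟨e4, h4⟩ := Int.even_mul_succ_self p
  have hX' : X = 4*(2*e4-p) - 2 - 16*e1 + 16*e2 + 2 - 4 - 32*e3 := by
    rw [hX]; linear_combination 4*h4 - 8*h1 + 8*h2 - 16*h3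
  have hY' : Y = 8*(p*q) + 4*p + 8*e1 + 1 + 16*(r*s) + 8*r + 8*s + 4 + 16*e3 + 2 := by
    rw [hY]; linear_combination 4*h1 + 8*h3
  have hXY : X = 4 ∧ Y = -1 := by
    generalize p*q = pq at *
    generalize r*s = rs at *
    clear hX hY h1 h2 h3 h4
    interval_cases X <;> first | omega | (interval_cases Y <;> omega)
  obtain ⟨rfl, rfl⟩ := hXY
  -- now reduce mod 7
  have h7 : (2*p + 4*(2*q+1))^2 + 2*((2*r+1) + 4*(2*s+1))^2 = 0 + 7 * (2*(2*q+1)^2 + 2*p*(2*q+1)*0 + 4*(2*s+1)^2) + (4 + 4*(-1)) := by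
    linear_combination -hX - 4*hY
  have key : ∀ u w : ZMod 7, u^2 + 2*w^2 = 0 → u = 0 ∧ w = 0 := by decide
  have hz : ((2*p + 4*(2*q+1) : ℤ) : ZMod 7)^2 + 2*(((2*r+1) + 4*(2*s+1) : ℤ) : ZMod 7)^2 = 0 := by
    have := congrArg (Int.cast : ℤ → ZMod 7) h7
    have h70 : (7 : ZMod 7) = 0 := by decide
    push_cast at this ⊢
    rw [this, h70]; ring
  obtain ⟨hu, hw⟩ := key _ _ hz
  rw [ZMod.intCast_zmod_eq_zero_iff_dvd] at hu hw
  obtain ⟨k, hk⟩ := hu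
  obtain ⟨l, hl⟩ := hw
  have : (-1 : ℤ) = 7 * (2*k*(2*q+1) - (2*q+1)^2 + 2*(2*l*(2*s+1) - (2*s+1)^2)) := by
    rw [hY]; push_cast at hk hl; linear_combination 2*(2*q+1)*hk + 4*(2*s+1)*hl
  omega

/-- Parity argument for integrality. -/
theorem parity_s11 (m n k l t1 t2 : ℤ)
    (h1 : 2*(m^2-2*n^2) + (k^2-2*l^2) = 8*t1)
    (h2 : 2*(2*m*n+n^2) + 2*k*l + l^2 = 8*t2) :
    2 ∣ m ∧ 2 ∣ n ∧ 4 ∣ k ∧ 4 ∣ l := by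
  have ev : ∀ z w : ℤ, z^2 = 2*w → ∃ z', z = 2*z' := fun z w h =>
    Int.prime_two.dvd_of_dvd_pow ⟨w, h⟩
  obtain ⟨l, rfl⟩ := ev l (4*t2 - (2*m*n+n^2) - k*l) (by linarith)
  obtain ⟨k, rfl⟩ := ev k (4*t1 - (m^2-2*n^2) + (2*l)^2) (by linarith)
  obtain ⟨n, rfl⟩ := ev n (2*t2 - m*n - 2*k*l - l^2) (by linarith)
  obtain ⟨m, rfl⟩ := ev m (2*t1 + (2*n)^2 - (k^2-2*l^2)) (by linarith)
  obtain ⟨l, rfl⟩ := ev l (t2 - 2*m*n - n^2 - k*l) (by linarith)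
  obtain ⟨k, rfl⟩ := ev k (t1 - m^2 + 2*n^2 + (2*l)^2) (by linarith)
  refine ⟨⟨m, rfl⟩, ⟨n, rfl⟩, ⟨k, by ring⟩, ⟨l, by ring⟩⟩

theorem rat_sq (x : ℚ) (z : ℤ) (h : x^2 = z) : ∃ y : ℤ, x = y := by
  have : IsIntegral ℤ x := by
    refine IsIntegral.of_pow (n := 2) (by norm_num) ?_
    rw [h]; exact isIntegral_algebraMap
  obtain ⟨y, hy⟩ := IsIntegrallyClosed.isIntegral_iff.1 this
  exact ⟨y, by simpa using hy.symm⟩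

theorem rat_no_sq (x : ℚ) (z : ℤ) (h : x^2 = z) (hz : ¬ IsSquare z) : False := by
  obtain ⟨y, rfl⟩ := rat_sq x z h
  exact hz ⟨y, by rw [← sq]; exact_mod_cast h.symm⟩

theorem quad_int (p q : ℚ) (M T : ℤ) (h1 : 2*p = M) (h2 : p^2+7*q^2 = T) :
    ∃ m n : ℤ, p = m + n/2 ∧ q = n/2 := by
  obtain ⟨N, hN⟩ := rat_sq (14*q) (7*(4*T-M^2)) (by push_cast; rw [← h1, ← h2]; ring)
  have hN2 : N^2 = 7*(4*T-M^2) := by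
    have : (N:ℚ)^2 = 7*(4*T-M^2) := by rw [← hN, ← h1, ← h2]; ring
    exact_mod_cast this
  have h7 : (7:ℤ) ∣ N := Int.Prime.dvd_pow' (p := 7) (k := 2) (by norm_num) ⟨_, hN2⟩
  obtain ⟨n, rfl⟩ := h7
  have h3 : 7*n^2 = 4*T-M^2 := by linarith
  have h4 : (2:ℤ) ∣ M - n := by
    obtain ⟨e1, h1⟩ := Int.even_mul_succ_self n
    obtain ⟨e2, h2⟩ := Int.even_mul_succ_self M
    have : 7*(e1+e1-n) = 4*T-(e2+e2-M) := by rw [← h1, ← h2]; linarith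
    omega
  obtain ⟨m, hm⟩ := h4
  have hm' : (M:ℚ) - n = 2*m := by exact_mod_cast hm
  push_cast at hN
  exact ⟨m, n, by linarith, by linarith⟩

section field
variable {K : Type*} [Field K] [NumberField K] {a b : K}

theorem integral_of_eq {s t : K} (h : IsIntegral ℤ s) (e : t = s) : IsIntegral ℤ t := e ▸ h

theorem lin2 (ha : a ^ 2 = -2) (x y : ℚ) (h : (x:K) + y*a = 0) : x = 0 ∧ y = 0 := by
  by_cases hy : y = 0
  · subst hy
    simpa using h
  · exfalso
    have hy' : (y:K) ≠ 0 := by exact_mod_cast hy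
    have : ((x^2 + 2*y^2 : ℚ) : K) = 0 := by
      push_cast; linear_combination (x - y*a)*h + y^2*ha
    have h0 : x^2+2*y^2 = 0 := by exact_mod_cast this
    have : 0 < y^2 := by positivity
    nlinarith [sq_nonneg x]

theorem lin4 (ha : a ^ 2 = -2) (hb : b ^ 2 = -7) (x y z w : ℚ)
    (h : (x:K) + y*a + z*b + w*(a*b) = 0) : x = 0 ∧ y = 0 ∧ z = 0 ∧ w = 0 := by
  by_cases hzw : z = 0 ∧ w = 0
  · obtain ⟨rfl, rfl⟩ := hzw
    have := lin2 ha x y (by simpa using h)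
    tauto
  · exfalso
    have hD : z^2 + 2*w^2 ≠ 0 := by
      intro h0
      have hz : z = 0 := by nlinarith [sq_nonneg z, sq_nonneg w]
      have hw : w = 0 := by nlinarith [sq_nonneg z, sq_nonneg w]
      exact hzw ⟨hz, hw⟩
    have hD' : ((z^2 + 2*w^2 : ℚ) : K) ≠ 0 := by exact_mod_cast hD
    -- D * b = -(x + y a)(z - w a)
    obtain ⟨p, hp⟩ : ∃ p : ℚ, p = -(x*z + 2*y*w)/(z^2+2*w^2) := ⟨_, rfl⟩
    obtain ⟨q, hq⟩ : ∃ q : ℚ, q = -(y*z - x*w)/(z^2+2*w^2) := ⟨_, rfl⟩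
    have hp' : p*(z^2+2*w^2) = -(x*z + 2*y*w) := by rw [hp, div_mul_cancel₀ _ hD]
    have hq' : q*(z^2+2*w^2) = -(y*z - x*w) := by rw [hq, div_mul_cancel₀ _ hD]
    have hpK : (p:K)*(z^2+2*w^2) = -(x*z + 2*y*w) := by exact_mod_cast hp'
    have hqK : (q:K)*(z^2+2*w^2) = -(y*z - x*w) := by exact_mod_cast hq'
    have hbK : b = p + q*a := by
      apply mul_left_cancel₀ hD'
      push_cast
      linear_combination (z - w*a)*h - hpK - a*hqK + (y*w + w^2*b)*ha
    have := lin2 ha (p^2 - 2*q^2 + 7) (2*p*q) (by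
      push_cast
      rw [hbK] at hb
      linear_combination hb - q^2*ha)
    obtain ⟨e1, e2⟩ := this
    rcases mul_eq_zero.1 e2 with e | e
    · have e : p = 0 := by linarith
      subst e
      refine rat_no_sq (2*q) 14 (by push_cast; linarith) ?_
      rintro ⟨r, hr⟩
      have : r ≤ 4 := by nlinarith
      have : -4 ≤ r := by nlinarith
      interval_cases r <;> omega
    · subst e
      nlinarith [sq_nonneg p]

theorem exists_basis (ha : a ^ 2 = -2) (hb : b ^ 2 = -7) (h4 : Module.finrank ℚ K = 4) :
    ∃ B : Module.Basis (Fin 4) ℚ K, ⇑B = ![1, a, b, a*b] := by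
  have hli : LinearIndependent ℚ ![1, a, b, a*b] := by
    rw [Fintype.linearIndependent_iff]
    intro g hg
    simp only [Fin.sum_univ_four, Algebra.smul_def, eq_ratCast] at hg
    have := lin4 ha hb (g 0) (g 1) (g 2) (g 3) (by simpa using hg)
    intro i
    fin_cases i <;> simp <;> tauto
  exact ⟨basisOfLinearIndependentOfCardEqFinrank hli (by simp [h4]), by simp⟩

theorem exists_coords (ha : a ^ 2 = -2) (hb : b ^ 2 = -7) (h4 : Module.finrank ℚ K = 4) (α : K) :
    ∃ x y z w : ℚ, α = x + y*a + z*b + w*(a*b) := by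
  obtain ⟨B, hB⟩ := exists_basis ha hb h4
  refine ⟨B.repr α 0, B.repr α 1, B.repr α 2, B.repr α 3, ?_⟩
  conv_lhs => rw [← B.sum_repr α]
  simp [Fin.sum_univ_four, hB, Algebra.smul_def]

theorem norm_formula (ha : a ^ 2 = -2) (hb : b ^ 2 = -7) (h4 : Module.finrank ℚ K = 4)
    (x y z w : ℚ) :
    Algebra.norm ℚ ((x:K) + y*a + z*b + w*(a*b)) =
      (x^2-7*z^2+2*(y^2-7*w^2))^2 + 7*(2*x*z+4*y*w)^2 := by
  obtain ⟨B, hB⟩ := exists_basis ha hb h4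
  have hM : Algebra.leftMulMatrix B ((x:K) + y*a + z*b + w*(a*b)) =
      !![x, -2*y, -7*z, 14*w; y, x, -7*w, -7*z; z, -2*w, x, -2*y; w, z, y, x] := by
    have hrep : ∀ (t : K) (c : Fin 4 → ℚ), t = ∑ i, c i • B i → ⇑(B.repr t) = c := by
      intro t c h
      rw [h]; exact B.repr_sum_self c
    ext i j
    rw [Algebra.leftMulMatrix_eq_repr_mul]
    rw [hrep _ (fun i => (!![x, -2*y, -7*z, 14*w; y, x, -7*w, -7*z; z, -2*w, x, -2*y; w, z, y, x] : Matrix (Fin 4) (Fin 4) ℚ) i j)]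
    fin_cases j <;> simp [Fin.sum_univ_four, hB, Algebra.smul_def]
    · linear_combination (y + w*b)*ha
    · linear_combination (z + w*a)*hb
    · linear_combination (y*b + w*b^2)*ha + (z*a - 2*w)*hb
  rw [Algebra.norm_eq_matrix_det B, hM]
  simp [Matrix.det_succ_row_zero, Fin.sum_univ_succ, Fin.succAbove]
  ring

theorem exists_conj (ha : a ^ 2 = -2) (hb : b ^ 2 = -7) (h4 : Module.finrank ℚ K = 4)
    (e f : K) (he : e ^ 2 = -2) (hf : f ^ 2 = -7) :
    ∃ σ : K →ₐ[ℚ] K, σ a = e ∧ σ b = f := by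
  obtain ⟨B, hB⟩ := exists_basis ha hb h4
  let L : K →ₗ[ℚ] K := B.constr ℚ ![1, e, f, e*f]
  have h0 : L 1 = 1 := by
    have h := B.constr_basis ℚ ![1, e, f, e*f] 0
    rw [hB] at h
    exact h
  have h1 : L a = e := by
    have h := B.constr_basis ℚ ![1, e, f, e*f] 1
    rw [hB] at h
    exact h
  have h2 : L b = f := by
    have h := B.constr_basis ℚ ![1, e, f, e*f] 2
    rw [hB] at h
    exact h
  have h3 : L (a*b) = e*f := by
    have h := B.constr_basis ℚ ![1, e, f, e*f] 3
    rw [hB] at h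
    exact h
  have hL : ∀ x y z w : ℚ, L ((x:K) + y*a + z*b + w*(a*b)) = x + y*e + z*f + w*(e*f) := by
    intro x y z w
    have : (x:K) + y*a + z*b + w*(a*b) = x • 1 + y • a + z • b + w • (a*b) := by
      simp [Algebra.smul_def]
    rw [this]
    simp only [map_add, map_smul, h0, h1, h2, h3]
    simp [Algebra.smul_def]
  refine ⟨AlgHom.ofLinearMap L h0 ?_, h1, h2⟩
  intro s t
  obtain ⟨x, y, z, w, rfl⟩ := exists_coords ha hb h4 s
  obtain ⟨x', y', z', w', rfl⟩ := exists_coords ha hb h4 t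
  rw [hL, hL]
  have : ((x:K) + y*a + z*b + w*(a*b)) * ((x':K) + y'*a + z'*b + w'*(a*b)) =
    ((x*x' - 2*y*y' - 7*z*z' + 14*w*w' : ℚ) : K)
    + ((x*y' + y*x' - 7*z*w' - 7*w*z' : ℚ) : K) * a
    + ((x*z' + z*x' - 2*y*w' - 2*w*y' : ℚ) : K) * b
    + ((x*w' + w*x' + y*z' + z*y' : ℚ) : K) * (a*b) := by
    push_cast
    linear_combination ((y:K)*y' + y*w'*b + w*y'*b + w*w'*b^2)*ha + ((z:K)*z' + z*w'*a + w*z'*a - 2*w*w')*hb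
  rw [this, hL]
  push_cast
  linear_combination -((y:K)*y' + y*w'*f + w*y'*f + w*w'*f^2)*he - ((z:K)*z' + z*w'*e + w*z'*e - 2*w*w')*hf

theorem int_of_integral (x : ℚ) (h : IsIntegral ℤ (x : K)) : ∃ n : ℤ, x = n := by
  have : IsIntegral ℤ x := by
    rw [← isIntegral_algebraMap_iff (B := K) (algebraMap ℚ K).injective]
    simpa using h
  obtain ⟨y, hy⟩ := IsIntegrallyClosed.isIntegral_iff.1 this
  exact ⟨y, by simpa using hy.symm⟩

theorem quad_integral (ha : a ^ 2 = -2) (hb : b ^ 2 = -7) (h4 : Module.finrank ℚ K = 4)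
    (p q : ℚ) (h : IsIntegral ℤ ((p:K) + q*b)) : ∃ m n : ℤ, p = m + n/2 ∧ q = n/2 := by
  obtain ⟨σ, hσa, hσb⟩ := exists_conj ha hb h4 a (-b) ha (by rw [neg_sq, hb])
  have h' : IsIntegral ℤ (σ ((p:K) + q*b)) := h.map (σ.restrictScalars ℤ)
  have e : σ ((p:K) + q*b) = p - q*b := by simp [hσb]; ring
  rw [e] at h'
  obtain ⟨M, hM⟩ := int_of_integral (K := K) (2*p) (by
    refine integral_of_eq (h.add h') ?_; push_cast; ring)
  obtain ⟨T, hT⟩ := int_of_integral (K := K) (p^2+7*q^2) (by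
    refine integral_of_eq (h.mul h') ?_; push_cast; linear_combination q^2*hb)
  exact quad_int p q M T hM hT

theorem integral_coords (ha : a ^ 2 = -2) (hb : b ^ 2 = -7) (h4 : Module.finrank ℚ K = 4)
    (x y z w : ℚ) (h : IsIntegral ℤ ((x:K) + y*a + z*b + w*(a*b))) :
    ∃ m n k l : ℤ, x = m + n/2 ∧ z = n/2 ∧ y = k + l/2 ∧ w = l/2 := by
  obtain ⟨σ, hσa, hσb⟩ := exists_conj ha hb h4 (-a) b (by rw [neg_sq, ha]) hb
  have h' := h.map (σ.restrictScalars ℤ)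
  have e : (σ.restrictScalars ℤ) ((x:K) + y*a + z*b + w*(a*b)) = x - y*a + z*b - w*(a*b) := by
    simp [hσa, hσb]; ring
  rw [e] at h'
  have hai : IsIntegral ℤ a := by
    refine IsIntegral.of_pow (n := 2) (by norm_num) ?_
    rw [ha]
    exact_mod_cast (isIntegral_algebraMap (R := ℤ) (A := K) (x := -2))
  obtain ⟨m, n, hm, hn⟩ := quad_integral ha hb h4 (2*x) (2*z) (by
    refine integral_of_eq (h.add h') ?_; push_cast; ring)
  obtain ⟨k, l, hk, hl⟩ := quad_integral ha hb h4 (-4*y) (-4*w) (by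
    refine integral_of_eq ((h.sub h').mul hai) ?_; push_cast
    linear_combination (-2*(y:K) - 2*w*b)*ha)
  obtain ⟨t1, t2, h1, h2⟩ := quad_integral ha hb h4 (x^2-7*z^2+2*(y^2-7*w^2)) (2*x*z+4*y*w) (by
    refine integral_of_eq (h.mul h') ?_; push_cast
    linear_combination ((y:K)+w*b)^2*ha - (z^2 + 2*w^2)*hb)
  have hx : x = (m + n/2)/2 := by linarith
  have hz : z = (n/2)/2 := by linarith
  have hy : y = -(k + l/2)/4 := by linarith
  have hw : w = -(l/2)/4 := by linarith
  have h2' : (t2:ℚ) = 2*(2*x*z+4*y*w) := by linarith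
  have h1' : (t1:ℚ) = x^2-7*z^2+2*(y^2-7*w^2) - (2*x*z+4*y*w) := by linarith
  obtain ⟨⟨m', rfl⟩, ⟨n', rfl⟩, ⟨k', rfl⟩, ⟨l', rfl⟩⟩ := parity_s11 m n k l t1 t2
    (by
      have : 2*((m:ℚ)^2-2*n^2) + (k^2-2*l^2) = 8*t1 := by rw [h1', hx, hy, hz, hw]; ring
      exact_mod_cast this)
    (by
      have : 2*(2*(m:ℚ)*n+n^2) + 2*k*l + l^2 = 8*t2 := by rw [h2', hx, hy, hz, hw]; ring
      exact_mod_cast this)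
  push_cast at hx hy hz hw
  refine ⟨m', n', -k', -l', ?_, ?_, ?_, ?_⟩ <;> push_cast <;> linarith

end field

/-- The field `K = ℚ(√-2, √-7)` is not norm-Euclidean. -/
theorem sqrt_neg2_sqrt_neg7_not_normEuclidean
    {K : Type*} [Field K] [NumberField K]
    (a b : K) (ha : a ^ 2 = -2) (hb : b ^ 2 = -7)
    (h4 : Module.finrank ℚ K = 4) :
    ¬ IsNormEuclidean K := by
  intro H
  -- `ξ = (ω + (1 - ω) a) / 2` with `ω = (1 + b) / 2`
  obtain ⟨η, hη⟩ := H (((1/4 : ℚ) : K) + ((1/4 : ℚ) : K)*a + ((1/4 : ℚ) : K)*b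
    + ((-1/4 : ℚ) : K)*(a*b))
  obtain ⟨x, y, z, w, hxyz⟩ := exists_coords ha hb h4 (η : K)
  have hint : IsIntegral ℤ (η : K) := η.isIntegral_coe
  rw [hxyz] at hint
  obtain ⟨m, n, k, l, hx, hz, hy, hw⟩ := integral_coords ha hb h4 x y z w hint
  have e : (((1/4 : ℚ) : K) + ((1/4 : ℚ) : K)*a + ((1/4 : ℚ) : K)*b
      + ((-1/4 : ℚ) : K)*(a*b)) - (η : K) =
      ((1/4 - x : ℚ) : K) + ((1/4 - y : ℚ) : K)*a + ((1/4 - z : ℚ) : K)*b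
      + ((-1/4 - w : ℚ) : K)*(a*b) := by
    rw [hxyz]; push_cast; ring
  rw [e, norm_formula ha hb h4] at hη
  have hη := (abs_lt.1 hη).2
  refine core_int (-m) (-n) (-k) (-l-1) _ _ rfl rfl ?_
  rw [hx, hy, hz, hw] at hη
  rify
  have hη' : ((((1/4 - (m + n/2) : ℚ)^2-7*(1/4 - n/2)^2+2*((1/4-(k+l/2))^2-7*(-1/4-l/2)^2))^2 + 7*(2*(1/4 - (m + n/2))*(1/4 - n/2)+4*(1/4-(k+l/2))*(-1/4-l/2))^2 : ℚ) : ℝ) < 1 := by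
    exact_mod_cast hη
  push_cast at hη'
  nlinarith [hη']
end

section
/- Let m < 0 and n < 0 be such that 2 is unramified in K = ℚ(√m, √n). If the ring of integers of K is norm-Euclidean, then |m| < 64 and |n| < 64. -/
open NumberField

theorem aux_mod_four {K : Type*} [Field K] [NumberField K]
    (m : ℤ) (hmsf : Squarefree m) (sm : K) (hsm : sm ^ 2 = (m : K))
    (hunram : ∀ P : Ideal (𝓞 K), P.IsPrime → ¬ P ^ 2 ∣ Ideal.span {(2 : 𝓞 K)}) :
    m % 4 = 1 := by
  have hint : IsIntegral ℤ sm := by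
    refine IsIntegral.of_pow (n := 2) (by norm_num) ?_
    rw [hsm]
    exact isIntegral_algebraMap (R := ℤ) (A := K) (x := m)
  obtain ⟨s, hs⟩ : ∃ s : 𝓞 K, (s : K) = sm := ⟨⟨sm, hint⟩, rfl⟩
  have hs2 : s ^ 2 = (m : 𝓞 K) := by
    apply RingOfIntegers.ext
    change algebraMap (𝓞 K) K (s ^ 2) = algebraMap (𝓞 K) K (m : 𝓞 K)
    rw [map_pow, map_intCast, ← hsm, ← hs]
  have h2 : ¬ IsUnit (2 : 𝓞 K) := by
    intro hu
    have h1 := hu.map (Algebra.norm ℤ)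
    have : Algebra.norm ℤ (2 : 𝓞 K) = 2 ^ Module.finrank ℤ (𝓞 K) := by
      have := Algebra.norm_algebraMap_of_basis (NumberField.RingOfIntegers.basis K) (2 : ℤ)
      rw [← Module.finrank_eq_card_chooseBasisIndex] at this
      simpa using this
    rw [this, isUnit_pow_iff (by exact Module.finrank_pos.ne')] at h1
    rw [Int.isUnit_iff] at h1
    omega
  obtain ⟨Q, hQ, hle⟩ := Ideal.exists_le_maximal (Ideal.span {(2 : 𝓞 K)})
    (by rwa [Ne, Ideal.span_singleton_eq_top])
  have hQp : Q.IsPrime := hQ.isPrime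
  have h2Q : (2 : 𝓞 K) ∈ Q := hle (Ideal.mem_span_singleton_self _)
  have hno : (2 : 𝓞 K) ∉ Q ^ 2 := by
    intro h
    apply hunram Q hQp
    rw [Ideal.dvd_iff_le, Ideal.span_singleton_le_iff_mem]
    exact h
  have hmul : ∀ a b : 𝓞 K, a ∈ Q → b ∈ Q → a * b ∈ Q ^ 2 := by
    intro a b ha hb
    rw [pow_two]
    exact Ideal.mul_mem_mul ha hb
  have h4 : m % 4 ≠ 0 := by
    intro h
    have hd : (2 : ℤ) * 2 ∣ m := by omega
    have := hmsf 2 hd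
    rw [Int.isUnit_iff] at this
    omega
  have hcase : m % 4 = 1 ∨ m % 4 = 2 ∨ m % 4 = 3 := by omega
  rcases hcase with h | h | h
  · exact h
  · exfalso
    obtain ⟨c, hc⟩ : ∃ c, m = 4 * c + 2 := ⟨m / 4, by omega⟩
    have hcK : s ^ 2 = 4 * (c : 𝓞 K) + 2 := by rw [hs2, hc]; push_cast; ring
    have hsQ : s ∈ Q := by
      apply hQp.mem_of_pow_mem 2
      rw [hcK]
      have : (4 * (c : 𝓞 K) + 2) = (2 * c + 1) * 2 := by ring
      rw [this]
      exact Q.mul_mem_left _ h2Q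
    apply hno
    have e : (2 : 𝓞 K) = s * s - c * (2 * 2) := by linear_combination -hcK
    rw [e]
    exact Ideal.sub_mem _ (hmul _ _ hsQ hsQ) (Ideal.mul_mem_left _ _ (hmul _ _ h2Q h2Q))
  · exfalso
    obtain ⟨c, hc⟩ : ∃ c, m = 4 * c + 3 := ⟨m / 4, by omega⟩
    have hcK : s ^ 2 = 4 * (c : 𝓞 K) + 3 := by rw [hs2, hc]; push_cast; ring
    have hsQ : 1 + s ∈ Q := by
      apply hQp.mem_of_pow_mem 2
      have : (1 + s) ^ 2 = (2 * c + 2 + s) * 2 := by linear_combination hcK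
      rw [this]
      exact Q.mul_mem_left _ h2Q
    apply hno
    have e : (2 : 𝓞 K) = 2 * (1 + s) - (1 + s) * (1 + s) + (c + 1) * (2 * 2) := by
      linear_combination hcK
    rw [e]
    exact Ideal.add_mem _ (Ideal.sub_mem _ (hmul _ _ h2Q hsQ) (hmul _ _ hsQ hsQ))
      (Ideal.mul_mem_left _ _ (hmul _ _ h2Q h2Q))

theorem aux_norm_two {F L : Type*} [Field F] [Field L] [Algebra F L]
    (h : Module.finrank F L = 2) (a : F) (x : L) :
    Algebra.norm F (algebraMap F L a - 2 * x)
      = a ^ 2 + 2 * (2 * Algebra.norm F x - a * Algebra.trace F L x) := by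
  have : FiniteDimensional F L := Module.finite_of_finrank_pos (by omega)
  let b := Module.finBasisOfFinrankEq F L h
  rw [Algebra.norm_eq_matrix_det b, Algebra.norm_eq_matrix_det b,
    Algebra.trace_eq_matrix_trace b, map_sub, map_mul, AlgHom.commutes, map_ofNat,
    Matrix.det_fin_two, Matrix.det_fin_two, Matrix.trace_fin_two]
  have e2 : (2 : Matrix (Fin 2) (Fin 2) F) = algebraMap F _ 2 := (map_ofNat (algebraMap F _) 2).symm
  rw [e2]
  simp [Matrix.algebraMap_eq_diagonal, Matrix.mul_apply, Fin.sum_univ_two]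
  ring

/-- Norm and trace in a quadratic field. -/
theorem aux_quad {F L : Type*} [Field F] [Field L] [Algebra F L]
    (h : Module.finrank F L = 2) (s : L) (m : F) (hs : s ^ 2 = algebraMap F L m)
    (hns : ∀ r : F, algebraMap F L r ≠ s) :
    (∀ z : L, ∃ x y : F, z = algebraMap F L x + algebraMap F L y * s) ∧
    ∀ x y : F, Algebra.norm F (algebraMap F L x + algebraMap F L y * s) = x ^ 2 - m * y ^ 2 ∧
      Algebra.trace F L (algebraMap F L x + algebraMap F L y * s) = 2 * x := by
  have hli : LinearIndependent F ![(1 : L), s] := by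
    rw [LinearIndependent.pair_iff]
    intro p q hpq
    have hq : q = 0 := by
      by_contra hq
      apply hns (-p / q)
      have hq' : algebraMap F L q ≠ 0 := by simpa using hq
      rw [map_div₀, map_neg, div_eq_iff hq']
      rw [Algebra.smul_def, Algebra.smul_def] at hpq
      linear_combination -hpq
    subst hq
    simpa using hpq
  let b : Module.Basis (Fin 2) F L := basisOfLinearIndependentOfCardEqFinrank hli (by simp [h])
  have hb0 : b 0 = 1 := by simp [b]
  have hb1 : b 1 = s := by simp [b]
  refine ⟨fun z => ⟨b.repr z 0, b.repr z 1, ?_⟩, fun x y => ?_⟩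
  · have := b.sum_repr z
    rw [Fin.sum_univ_two, hb0, hb1, Algebra.smul_def, Algebra.smul_def, mul_one] at this
    exact this.symm
  · have hrep : ∀ p q : F, b.repr (algebraMap F L p + algebraMap F L q * s)
        = Finsupp.single 0 p + Finsupp.single 1 q := by
      intro p q
      have : algebraMap F L p + algebraMap F L q * s = p • b 0 + q • b 1 := by
        rw [hb0, hb1, Algebra.smul_def, Algebra.smul_def, mul_one]
      rw [this]
      simp
    have hM : Algebra.leftMulMatrix b (algebraMap F L x + algebraMap F L y * s)
        = !![x, m * y; y, x] := by
      have e0 : (algebraMap F L x + algebraMap F L y * s) * b 0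
          = algebraMap F L x + algebraMap F L y * s := by rw [hb0, mul_one]
      have e1 : (algebraMap F L x + algebraMap F L y * s) * b 1
          = algebraMap F L (m * y) + algebraMap F L x * s := by
        rw [hb1, map_mul]; linear_combination algebraMap F L y * hs
      ext i j
      rw [Algebra.leftMulMatrix_eq_repr_mul]
      fin_cases j
      · simp only [Fin.zero_eta, e0, hrep]
        fin_cases i <;> simp
      · simp only [Fin.mk_one, e1, hrep]
        fin_cases i <;> simp
    rw [Algebra.norm_eq_matrix_det b, Algebra.trace_eq_matrix_trace b, hM]
    simp [Matrix.det_fin_two, Matrix.trace_fin_two]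
    constructor <;> ring

theorem aux_sqfree_rat (m : ℤ) (hm : Squarefree m) (r : ℚ) (N : ℤ) (h : m * r ^ 2 = N) :
    ∃ B : ℤ, r = B := by
  have hd : (r.den : ℚ) ≠ 0 := by exact_mod_cast r.den_ne_zero
  have h1 : m * r.num ^ 2 = N * (r.den : ℤ) ^ 2 := by
    have : (m : ℚ) * r.num ^ 2 = N * (r.den : ℚ) ^ 2 := by
      rw [← h]
      nth_rewrite 2 [← Rat.num_div_den r]
      field_simp
    exact_mod_cast this
  have hcop : IsCoprime ((r.den : ℤ) ^ 2) (r.num ^ 2) :=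
    (r.isCoprime_num_den.symm).pow
  have hdvd : (r.den : ℤ) * r.den ∣ m := by
    rw [← pow_two]
    exact hcop.dvd_of_dvd_mul_right ⟨N, by rw [h1]; ring⟩
  have hu := hm _ hdvd
  have : r.den = 1 := by simpa [Int.isUnit_iff_natAbs_eq] using hu
  exact ⟨r.num, ((Rat.den_eq_one_iff r).1 this).symm⟩

theorem aux_quad_bound {k : Type*} [Field k] [NumberField k]
    (h : Module.finrank ℚ k = 2) (m : ℤ) (hmsf : Squarefree m) (hm : m < 0)
    (s δ : k) (hs : s ^ 2 = (m : k)) (hδ : IsIntegral ℤ δ)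
    (hN : |Algebra.norm ℚ (((1 + s) / 2) ^ 2 + 2 * δ)| < 16) : |m| < 64 := by
  have hns : ∀ r : ℚ, algebraMap ℚ k r ≠ s := by
    intro r hr
    rw [← hr, ← map_pow] at hs
    have : r ^ 2 = m := by
      apply (algebraMap ℚ k).injective
      rw [hs]; simp
    have h2 : (m : ℚ) < 0 := by exact_mod_cast hm
    nlinarith [sq_nonneg r]
  obtain ⟨hrep, hnt⟩ := aux_quad h s (m : ℚ) (by rw [hs]; simp) hns
  obtain ⟨x, y, rfl⟩ := hrep δ
  obtain ⟨A, hA⟩ := IsIntegrallyClosed.isIntegral_iff.1 (Algebra.isIntegral_trace (L := ℚ) hδ)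
  obtain ⟨N, hNN⟩ := IsIntegrallyClosed.isIntegral_iff.1 (Algebra.isIntegral_norm ℚ hδ)
  rw [(hnt x y).2] at hA
  rw [(hnt x y).1] at hNN
  simp only [eq_intCast] at hA hNN
  obtain ⟨B, hB⟩ := aux_sqfree_rat m hmsf (2 * y) (A ^ 2 - 4 * N) (by
    push_cast; rw [hA, hNN]; ring)
  have e : ((1 + s) / 2) ^ 2 + 2 * (algebraMap ℚ k x + algebraMap ℚ k y * s)
      = algebraMap ℚ k ((1 + m) / 4 + 2 * x) + algebraMap ℚ k (1 / 2 + 2 * y) * s := by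
    simp only [map_add, map_mul, map_div₀, map_one, map_ofNat, map_intCast]
    linear_combination hs / 4
  rw [e, (hnt _ _).1, hB] at hN
  have h2 := (abs_lt.1 hN).2
  have hmq : (m : ℚ) < 0 := by exact_mod_cast hm
  have hBB : (0 : ℚ) ≤ B * (B + 1) := by
    have : 0 ≤ B * (B + 1) := by
      rcases le_or_gt 0 B with hb | hb
      · positivity
      · nlinarith
    exact_mod_cast this
  have : -(m : ℚ) < 64 := by
    nlinarith [sq_nonneg ((1 + (m : ℚ)) / 4 + 2 * x), mul_nonneg (neg_pos.2 hmq).le hBB]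
  rw [abs_of_neg hm]
  exact_mod_cast this

theorem aux_one {K : Type*} [Field K] [NumberField K]
    (m : ℤ) (hmsf : Squarefree m) (hmneg : m < 0)
    (sm : K) (hsm : sm ^ 2 = (m : K))
    (h4 : Module.finrank ℚ K = 4)
    (hunram : ∀ P : Ideal (𝓞 K), P.IsPrime → ¬ P ^ 2 ∣ Ideal.span {(2 : 𝓞 K)})
    (hE : IsNormEuclidean K) : |m| < 64 := by
  have hmod := aux_mod_four m hmsf sm hsm hunram
  have hint : IsIntegral ℚ sm := Algebra.IsIntegral.isIntegral sm
  have hk : Module.finrank ℚ (IntermediateField.adjoin ℚ {sm}) = 2 := by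
    rw [IntermediateField.adjoin.finrank hint]
    have hle : (minpoly ℚ sm).natDegree ≤ 2 := by
      have hp : (Polynomial.X ^ 2 - Polynomial.C (m : ℚ)).Monic :=
        Polynomial.monic_X_pow_sub_C _ (by norm_num)
      have := Polynomial.natDegree_le_natDegree (minpoly.min ℚ sm hp (by simp [hsm]))
      rwa [Polynomial.natDegree_X_pow_sub_C] at this
    have hge : 2 ≤ (minpoly ℚ sm).natDegree := by
      rw [minpoly.two_le_natDegree_iff hint]
      rintro ⟨r, hr⟩
      rw [← hr, ← map_pow] at hsm
      have : r ^ 2 = m := by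
        apply (algebraMap ℚ K).injective
        rw [hsm]; simp
      have h2 : (m : ℚ) < 0 := by exact_mod_cast hmneg
      nlinarith [sq_nonneg r]
    omega
  let k := IntermediateField.adjoin ℚ {sm}
  have hkK : Module.finrank k K = 2 := by
    have := Module.finrank_mul_finrank ℚ k K
    rw [h4] at this
    change Module.finrank ℚ k = 2 at hk
    rw [hk] at this
    omega
  let s : k := ⟨sm, IntermediateField.mem_adjoin_simple_self ℚ sm⟩
  have hsK : algebraMap k K s = sm := rfl
  have hs : s ^ 2 = (m : k) := by
    apply (algebraMap k K).injective
    rw [map_pow, hsK, hsm]; simp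
  let α : k := (1 + s) / 2
  have hα : IsIntegral ℤ α := by
    obtain ⟨c, hc⟩ : ∃ c, m = 4 * c + 1 := ⟨m / 4, by omega⟩
    refine ⟨Polynomial.X ^ 2 - Polynomial.X - Polynomial.C c, by monicity!, ?_⟩
    have : s ^ 2 = 4 * (c : k) + 1 := by rw [hs, hc]; push_cast; ring
    simp only [α, Polynomial.eval₂_sub, Polynomial.eval₂_pow, Polynomial.eval₂_X,
      Polynomial.eval₂_C]
    rw [eq_intCast (algebraMap ℤ k) c]
    linear_combination this / 4
  obtain ⟨η, hη⟩ := hE (algebraMap k K α / 2)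
  have e : algebraMap k K α - 2 * (η : K) = algebraMap ℚ K 2 * (algebraMap k K α / 2 - (η : K)) := by
    simp; ring
  have hn : |Algebra.norm ℚ (algebraMap k K α - 2 * (η : K))| < 16 := by
    rw [e, map_mul, Algebra.norm_algebraMap, h4, abs_mul]
    have h16 : |(2 : ℚ) ^ 4| = 16 := by norm_num
    rw [h16]
    linarith
  rw [← Algebra.norm_norm (S := k), aux_norm_two hkK] at hn
  have hηi : IsIntegral ℤ (η : K) := RingOfIntegers.isIntegral_coe η
  have h2i : IsIntegral ℤ (2 : k) := by
    simpa using isIntegral_algebraMap (R := ℤ) (A := k) (x := 2)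
  refine aux_quad_bound (k := k) hk m hmsf hmneg s _ hs ?_ hn
  exact (h2i.mul (Algebra.isIntegral_norm k hηi)).sub (hα.mul (Algebra.isIntegral_trace hηi))

/-- Case (C): if `K = ℚ(√m, √n)` with `m, n < 0` and 2 unramified in `K`
is norm-Euclidean, then `|m| < 64` and `|n| < 64`. -/
theorem case_C_normEuclidean_bound
    {K : Type*} [Field K] [NumberField K]
    (m n : ℤ) (hmsf : Squarefree m) (hnsf : Squarefree n) (hmn : m ≠ n)
    (hmneg : m < 0) (hnneg : n < 0)
    (sm sn : K) (hsm : sm ^ 2 = (m : K)) (hsn : sn ^ 2 = (n : K))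
    (h4 : Module.finrank ℚ K = 4)
    (hunram : ∀ P : Ideal (𝓞 K), P.IsPrime → ¬ P ^ 2 ∣ Ideal.span {(2 : 𝓞 K)})
    (hE : IsNormEuclidean K) :
    |m| < 64 ∧ |n| < 64 := by
  exact ⟨aux_one m hmsf hmneg sm hsm h4 hunram hE, aux_one n hnsf hnneg sn hsn h4 hunram hE⟩
end

section
/- The ring of integers of K = ℚ(√−7, √−19) is not norm-Euclidean. -/
open NumberField

lemma aux_sq133 (r u : ℚ) (h : r ^ 2 = 133 * u ^ 2) : u = 0 := by
  by_contra hu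
  have h1 : (r / u) * (r / u) = 133 := by field_simp; linarith
  have h2 := (Rat.exists_mul_self (133 : ℚ)).1 ⟨_, h1⟩
  have h3 : Rat.sqrt 133 = 11 := by
    have : ((133 : ℕ) : ℚ) = 133 := by norm_num
    rw [← this, Rat.sqrt_natCast]
    have : Nat.sqrt 133 = 11 := (Nat.eq_sqrt.2 (by norm_num)).symm
    rw [this]; norm_num
  rw [h3] at h2
  norm_num at h2

section aux
variable {K : Type*} [Field K] [NumberField K]

lemma aux_a (a : K) (ha : a ^ 2 = -7) (r s : ℚ) (h : (r : K) + s * a = 0) : r = 0 ∧ s = 0 := by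
  have h1 : (r : K) ^ 2 + 7 * (s : K) ^ 2 = 0 := by
    linear_combination (r - s * a) * h + (s : K) ^ 2 * ha
  have h2 : r ^ 2 + 7 * s ^ 2 = 0 := by exact_mod_cast h1
  constructor <;> nlinarith [sq_nonneg r, sq_nonneg s]

lemma aux_indep (a b : K) (ha : a ^ 2 = -7) (hb : b ^ 2 = -19) (r s t u : ℚ)
    (h : (r : K) + s * a + t * b + u * (a * b) = 0) : r = 0 ∧ s = 0 ∧ t = 0 ∧ u = 0 := by
  have h1 : ((r ^ 2 - 7 * s ^ 2 + 19 * t ^ 2 - 133 * u ^ 2 : ℚ) : K)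
      + ((2 * r * s + 38 * t * u : ℚ) : K) * a = 0 := by
    push_cast
    linear_combination (r + s * a - t * b - u * (a * b)) * h
      + ((t : K) + u * a) ^ 2 * hb + (-(s : K) ^ 2 - 19 * (u : K) ^ 2) * ha
  obtain ⟨hA, hB⟩ := aux_a a ha _ _ h1
  have h2 : (r ^ 2 + 7 * s ^ 2) ^ 2 = (19 * (t ^ 2 + 7 * u ^ 2)) ^ 2 := by
    have e1 : r ^ 2 - 7 * s ^ 2 = -19 * (t ^ 2 - 7 * u ^ 2) := by linarith
    have e2 : r * s = -19 * (t * u) := by linarith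
    calc (r ^ 2 + 7 * s ^ 2) ^ 2 = (r ^ 2 - 7 * s ^ 2) ^ 2 + 28 * (r * s) ^ 2 := by ring
      _ = _ := by rw [e1, e2]; ring
  have h3 : r ^ 2 + 7 * s ^ 2 = 19 * (t ^ 2 + 7 * u ^ 2) :=
    (sq_eq_sq₀ (by positivity) (by positivity)).1 h2
  have hu : u = 0 := aux_sq133 r u (by linarith)
  have ht : t = 0 := aux_sq133 (7 * s) t (by linarith) |> fun h => h
  subst hu ht
  refine ⟨?_, ?_, rfl, rfl⟩ <;> nlinarith [sq_nonneg r, sq_nonneg s]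

lemma aux_basis (a b : K) (ha : a ^ 2 = -7) (hb : b ^ 2 = -19)
    (h4 : Module.finrank ℚ K = 4) :
    ∃ B : Module.Basis (Fin 4) ℚ K, ⇑B = ![1, a, b, a * b] := by
  have hl : LinearIndependent ℚ ![1, a, b, a * b] := by
    rw [Fintype.linearIndependent_iff]
    intro g hg
    simp [Fin.sum_univ_four, Rat.smul_def] at hg
    obtain ⟨h0, h1, h2, h3⟩ := aux_indep a b ha hb _ _ _ _ hg
    intro i
    fin_cases i <;> assumption
  exact ⟨basisOfLinearIndependentOfCardEqFinrank hl (by simp [h4]), by simp⟩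

lemma aux_coord (a b : K) (ha : a ^ 2 = -7) (hb : b ^ 2 = -19)
    (h4 : Module.finrank ℚ K = 4) (x : K) :
    ∃ r s t u : ℚ, x = (r : K) + s * a + t * b + u * (a * b) := by
  obtain ⟨B, hB⟩ := aux_basis a b ha hb h4
  refine ⟨B.repr x 0, B.repr x 1, B.repr x 2, B.repr x 3, ?_⟩
  conv_lhs => rw [← B.sum_repr x]
  simp [Fin.sum_univ_four, Rat.smul_def, hB]

lemma aux_hom (a b : K) (ha : a ^ 2 = -7) (hb : b ^ 2 = -19)
    (h4 : Module.finrank ℚ K = 4) (a' b' : K) (ha' : a' ^ 2 = -7) (hb' : b' ^ 2 = -19) :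
    ∃ σ : K →ₐ[ℚ] K, σ a = a' ∧ σ b = b' := by
  obtain ⟨B, hB⟩ := aux_basis a b ha hb h4
  let f : K →ₗ[ℚ] K := B.constr ℚ ![1, a', b', a' * b']
  have f0 : f 1 = 1 := by
    have := B.constr_basis ℚ ![1, a', b', a' * b'] 0
    rw [hB] at this
    exact this
  have f1 : f a = a' := by
    have := B.constr_basis ℚ ![1, a', b', a' * b'] 1
    rw [hB] at this
    exact this
  have f2 : f b = b' := by
    have := B.constr_basis ℚ ![1, a', b', a' * b'] 2
    rw [hB] at this
    exact this
  have f3 : f (a * b) = a' * b' := by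
    have := B.constr_basis ℚ ![1, a', b', a' * b'] 3
    rw [hB] at this
    exact this
  have key : ∀ r s t u : ℚ, f ((r : K) + s * a + t * b + u * (a * b))
      = (r : K) + s * a' + t * b' + u * (a' * b') := by
    intro r s t u
    have : (r : K) + s * a + t * b + u * (a * b) = r • (1 : K) + s • a + t • b + u • (a * b) := by
      simp [Rat.smul_def]
    rw [this]
    simp only [map_add, map_smul, f0, f1, f2, f3]
    simp [Rat.smul_def]
  refine ⟨AlgHom.ofLinearMap f f0 ?_, f1, f2⟩
  intro x y
  obtain ⟨r, s, t, u, rfl⟩ := aux_coord a b ha hb h4 x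
  obtain ⟨r', s', t', u', rfl⟩ := aux_coord a b ha hb h4 y
  have e : ((r : K) + s * a + t * b + u * (a * b)) * ((r' : K) + s' * a + t' * b + u' * (a * b))
     = ((r * r' - 7 * s * s' - 19 * t * t' + 133 * u * u' : ℚ) : K)
      + ((r * s' + s * r' - 19 * t * u' - 19 * u * t' : ℚ) : K) * a
      + ((r * t' + t * r' - 7 * s * u' - 7 * u * s' : ℚ) : K) * b
      + ((r * u' + u * r' + s * t' + t * s' : ℚ) : K) * (a * b) := by
    push_cast
    linear_combination ((s : K) + u * b) * (s' + u' * b) * ha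
      + ((t : K) * t' + t * u' * a + u * t' * a - 7 * u * u') * hb
  rw [e, key, key, key]
  push_cast
  linear_combination (-((s : K) + u * b') * (s' + u' * b')) * ha'
      - ((t : K) * t' + t * u' * a' + u * t' * a' - 7 * u * u') * hb'

lemma aux_int (q : ℚ) (h : IsIntegral ℤ (q : K)) : ∃ n : ℤ, q = n := by
  have h1 : IsIntegral ℤ (algebraMap ℚ K q) := by simpa using h
  have h2 : IsIntegral ℤ q := (isIntegral_algebraMap_iff (algebraMap ℚ K).injective).1 h1
  obtain ⟨n, hn⟩ := IsIntegrallyClosed.isIntegral_iff.1 h2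
  exact ⟨n, by simpa using hn.symm⟩

lemma aux_intb (b : K) (hb : b ^ 2 = -19) : IsIntegral ℤ b := by
  refine IsIntegral.of_pow (n := 2) (by norm_num) ?_
  rw [hb]
  exact_mod_cast isIntegral_algebraMap (R := ℤ) (A := K) (x := -19)

lemma aux_int_half (b : K) (c : ℤ) (hb : b ^ 2 = 1 - 4 * c) : IsIntegral ℤ ((1 + b) / 2) := by
  refine ⟨Polynomial.X ^ 2 - Polynomial.X + Polynomial.C c, ?_, ?_⟩
  · monicity!
  · simp only [Polynomial.eval₂_add, Polynomial.eval₂_sub, Polynomial.eval₂_pow, Polynomial.eval₂_X,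
      Polynomial.eval₂_C, algebraMap_int_eq, Int.coe_castRingHom]
    linear_combination hb / 4

lemma aux_ok (a b : K) (ha : a ^ 2 = -7) (hb : b ^ 2 = -19)
    (h4 : Module.finrank ℚ K = 4) (σ τ : K →ₐ[ℚ] K) (sa : σ a = -a) (sb : σ b = b)
    (tb : τ b = -b) (x : K) (hx : IsIntegral ℤ x) (sx : σ x = x) :
    ∃ m n : ℤ, x = m + n * ((1 + b) / 2) := by
  obtain ⟨r, s, t, u, rfl⟩ := aux_coord a b ha hb h4 x
  simp only [map_add, map_mul, map_ratCast, sa, sb] at sx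
  obtain ⟨-, hs, -, hu⟩ := aux_indep a b ha hb 0 s 0 u (by
    push_cast; linear_combination -sx / 2)
  subst hs hu
  have hx' : IsIntegral ℤ ((r : K) + t * b) := by simpa using hx
  have hy : IsIntegral ℤ ((r : K) - t * b) := by
    have := hx'.map (τ.restrictScalars ℤ)
    simpa [tb, ← sub_eq_add_neg] using this
  have hbi := aux_intb b hb
  obtain ⟨A, hA⟩ := aux_int (K := K) (2 * r) (by
    rw [show ((2 * r : ℚ) : K) = (r + t * b) + (r - t * b) by push_cast; ring]
    exact hx'.add hy)
  obtain ⟨B, hB⟩ := aux_int (K := K) (r ^ 2 + 19 * t ^ 2) (by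
    rw [show ((r ^ 2 + 19 * t ^ 2 : ℚ) : K) = (r + t * b) * (r - t * b) by
      push_cast; linear_combination (t : K) ^ 2 * hb]
    exact hx'.mul hy)
  obtain ⟨D, hD⟩ := aux_int (K := K) (38 * t) (by
    rw [show ((38 * t : ℚ) : K) = b * ((r - t * b) - (r + t * b)) by
      push_cast; linear_combination (2 * t : K) * hb]
    exact hbi.mul (hy.sub hx'))
  have e1 : 19 * A ^ 2 + D ^ 2 = 76 * B := by
    have : (19 * A ^ 2 + D ^ 2 : ℚ) = 76 * B := by
      rw [← hA, ← hB, ← hD]; ring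
    exact_mod_cast this
  have p19 : Prime (19 : ℤ) := by norm_num
  obtain ⟨n, rfl⟩ : (19 : ℤ) ∣ D := p19.dvd_of_dvd_pow (n := 2) ⟨4 * B - A ^ 2, by linarith⟩
  have e2 : A ^ 2 + 19 * n ^ 2 = 4 * B := by nlinarith
  have e3 : ∃ m, A = 2 * m + n := by
    have : Even (A - n) := by
      have h5 : Even ((A - n) ^ 2) := ⟨2 * B - 9 * n ^ 2 - A * n, by linarith⟩
      exact (Int.even_pow.1 h5).1
    obtain ⟨m, hm⟩ := this
    exact ⟨m, by linarith⟩
  obtain ⟨m, rfl⟩ := e3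
  refine ⟨m, n, ?_⟩
  have hr : r = m + n / 2 := by push_cast at hA; linarith
  have ht : t = n / 2 := by push_cast at hD; linarith
  subst hr ht
  push_cast
  ring

lemma aux_norm_hom (σ : K →ₐ[ℚ] K) (x : K) : Algebra.norm ℚ (σ x) = Algebra.norm ℚ x := by
  have hbij : Function.Bijective σ := Algebra.IsAlgebraic.algHom_bijective σ
  exact Algebra.norm_eq_of_algEquiv (AlgEquiv.ofBijective σ hbij) x

lemma aux_norm (h4 : Module.finrank ℚ K = 4) (σ τ : K →ₐ[ℚ] K) (x c : K) (q : ℚ)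
    (h1 : x * σ x = c) (h2 : c * τ c = q) : |Algebra.norm ℚ x| = |q| := by
  have e1 := congrArg (Algebra.norm ℚ) h1
  have e2 := congrArg (Algebra.norm ℚ) h2
  have e3 : Algebra.norm ℚ (q : K) = q ^ 4 := by
    have := Algebra.norm_algebraMap (S := K) q
    rw [h4] at this
    simpa using this
  rw [map_mul, aux_norm_hom] at e1 e2
  rw [e3, ← e1] at e2
  have e4 : |Algebra.norm ℚ x| ^ 4 = |q| ^ 4 := by
    rw [← abs_pow, ← abs_pow, ← e2]; ring_nf
  exact (pow_left_inj₀ (abs_nonneg _) (abs_nonneg _) (by norm_num)).1 e4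

end aux

/-- The field `K = ℚ(√-7, √-19)` is not norm-Euclidean. -/
theorem sqrt_neg7_sqrt_neg19_not_normEuclidean
    {K : Type*} [Field K] [NumberField K]
    (a b : K) (ha : a ^ 2 = -7) (hb : b ^ 2 = -19)
    (h4 : Module.finrank ℚ K = 4) :
    ¬ IsNormEuclidean K := by
  intro hE
  obtain ⟨σ, sa, sb⟩ := aux_hom a b ha hb h4 (-a) b (by rw [neg_sq, ha]) hb
  obtain ⟨τ, ta, tb⟩ := aux_hom a b ha hb h4 a (-b) ha (by rw [neg_sq, hb])
  have hσσ : ∀ x, σ (σ x) = x := by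
    intro x
    obtain ⟨r, s, t, u, rfl⟩ := aux_coord a b ha hb h4 x
    simp [sa, sb]
  obtain ⟨w, hw⟩ : ∃ w : K, w = (1 + b) / 2 := ⟨_, rfl⟩
  obtain ⟨θ, hθ⟩ : ∃ θ : K, θ = (1 + a) / 2 := ⟨_, rfl⟩
  have w2 : w ^ 2 = w - 5 := by rw [hw]; linear_combination hb / 4
  have θ2 : θ ^ 2 = θ - 2 := by rw [hθ]; linear_combination ha / 4
  have sw : σ w = w := by rw [hw, map_div₀, map_ofNat]; simp [sb]
  have tw : τ w = 1 - w := by rw [hw, map_div₀, map_ofNat]; simp [tb]; ring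
  have sθ : σ θ = 1 - θ := by rw [hθ, map_div₀, map_ofNat]; simp [sa]; ring
  have iw : IsIntegral ℤ w := by
    rw [hw]; exact aux_int_half b 5 (by rw [hb]; norm_num)
  have iθ : IsIntegral ℤ θ := by
    rw [hθ]; exact aux_int_half a 2 (by rw [ha]; norm_num)
  have iZ : ∀ n : ℤ, IsIntegral ℤ (n : K) := fun n => by
    simpa using isIntegral_algebraMap (R := ℤ) (A := K) (x := n)
  have iσ : ∀ x, IsIntegral ℤ x → IsIntegral ℤ (σ x) := fun x hx =>
    hx.map (σ.restrictScalars ℤ)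
  have ok : ∀ x, IsIntegral ℤ x → σ x = x → ∃ m n : ℤ, x = m + n * w := by
    intro x hx sx
    rw [hw]
    exact aux_ok a b ha hb h4 σ τ sa sb tb x hx sx
  have cmp : ∀ m n m' n' : ℤ, (m : K) + n * w = m' + n' * w → m = m' ∧ n = n' := by
    intro m n m' n' h
    rw [hw] at h
    obtain ⟨h1, -, h2, -⟩ := aux_indep a b ha hb (m - m' + (n - n') / 2) 0 ((n - n') / 2) 0 (by
      push_cast; linear_combination h)
    have h3 : (n : ℚ) = n' := by linarith
    have h5 : (m : ℚ) = m' := by rw [h3] at h1; linarith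
    exact ⟨by exact_mod_cast h5, by exact_mod_cast h3⟩
  obtain ⟨P, hP⟩ : ∃ P : K, P = 3 - w * θ := ⟨_, rfl⟩
  have sP : σ P = 3 - w * (1 - θ) := by rw [hP, map_sub, map_ofNat]; simp [sw, sθ]
  have PP : P * σ P = -(1 + w) := by
    rw [sP, hP]; linear_combination 2 * w2 - w ^ 2 * θ2
  have nP : |Algebra.norm ℚ P| = 7 := by
    rw [aux_norm h4 σ τ P _ 7 PP (by simp [tw]; linear_combination -w2)]; norm_num
  have P0 : P ≠ 0 := by
    rintro rfl
    simp at nP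
  obtain ⟨η, hη⟩ := hE (2 / P)
  obtain ⟨e, he⟩ : ∃ e : K, e = η := ⟨_, rfl⟩
  have ie : IsIntegral ℤ e := he ▸ η.isIntegral_coe
  rw [← he] at hη
  have hβ : |Algebra.norm ℚ (2 - e * P)| < 7 := by
    have : 2 - e * P = (2 / P - e) * P := by field_simp
    rw [this, map_mul, abs_mul, nP]
    linarith
  -- the trace
  obtain ⟨μ, hμ⟩ : ∃ μ : K, μ = 5 * (1 - θ) + 3 * w - 4 := ⟨_, rfl⟩
  have Pμ : P * μ = σ P := by
    rw [hμ, sP, hP]; linear_combination -3 * θ * w2 + 5 * w * θ2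
  have iμ : IsIntegral ℤ μ := by
    rw [hμ]
    have := (((iZ 5).mul ((iZ 1).sub iθ)).add ((iZ 3).mul iw)).sub (iZ 4)
    simpa using this
  have iP : IsIntegral ℤ P := by
    rw [hP]
    have := (iZ 3).sub (iw.mul iθ)
    simpa using this
  obtain ⟨v, hv⟩ : ∃ v : K, v = e + μ * σ e := ⟨_, rfl⟩
  have iv : IsIntegral ℤ v := hv ▸ ie.add (iμ.mul (iσ _ ie))
  obtain ⟨t, ht⟩ : ∃ t : K, t = e * P + σ (e * P) := ⟨_, rfl⟩
  have it : IsIntegral ℤ t := ht ▸ (ie.mul iP).add (iσ _ (ie.mul iP))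
  have st : σ t = t := by rw [ht, map_add, hσσ]; ring
  have tv : t = P * v := by
    rw [ht, hv, map_mul, ← Pμ]; ring
  have tt : t ^ 2 = (1 + w) * (-(v * σ v)) := by
    have h1 : t = σ P * σ v := by rw [← map_mul, ← tv, st]
    calc t ^ 2 = (P * v) * (σ P * σ v) := by rw [← h1, ← tv]; ring
      _ = (P * σ P) * (v * σ v) := by ring
      _ = _ := by rw [PP]; ring
  obtain ⟨m, n, hmn⟩ := ok t it st
  obtain ⟨m', n', hmn'⟩ := ok (-(v * σ v)) (iv.mul (iσ _ iv)).neg (by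
    rw [map_neg, map_mul, hσσ]; ring)
  obtain ⟨f, g, hfg⟩ := ok (e * σ e) (ie.mul (iσ _ ie)) (by
    rw [map_mul, hσσ]; ring)
  rw [hmn, hmn'] at tt
  obtain ⟨c1, c2⟩ := cmp (m ^ 2 - 5 * n ^ 2) (2 * m * n + n ^ 2) (m' - 5 * n') (m' + 2 * n') (by
    push_cast
    linear_combination tt + ((n' : K) - n ^ 2) * w2)
  have p7 : Prime (7 : ℤ) := by norm_num
  obtain ⟨k, hk⟩ : (7 : ℤ) ∣ m - n :=
    p7.dvd_of_dvd_pow (n := 2) ⟨n ^ 2 - n', by linarith⟩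
  obtain ⟨x, hx⟩ : ∃ x : ℤ, x = 4 - 2 * m - (f - 5 * g) := ⟨_, rfl⟩
  obtain ⟨y, hy⟩ : ∃ y : ℤ, y = -2 * n - (f + 2 * g) := ⟨_, rfl⟩
  have hc : (2 - e * P) * σ (2 - e * P) = x + y * w := by
    have h1 : (2 - e * P) * σ (2 - e * P) = 4 - 2 * t + (e * σ e) * (P * σ P) := by
      rw [ht, map_sub, map_ofNat]; simp; ring
    rw [h1, PP, hfg, hmn, hx, hy]
    push_cast
    linear_combination -(g : K) * w2
  have hN := aux_norm h4 σ τ (2 - e * P) _ ((x ^ 2 + x * y + 5 * y ^ 2 : ℤ) : ℚ) hc (by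
    simp [tw]; linear_combination -(y : K) ^ 2 * w2)
  rw [hN] at hβ
  have hlt : x ^ 2 + x * y + 5 * y ^ 2 < 7 := by
    have := lt_of_le_of_lt (le_abs_self _) hβ
    exact_mod_cast this
  have hxy : x - y = 4 - 14 * k + 7 * g := by linarith
  have y1 : y ≤ 1 := by nlinarith [sq_nonneg (2 * x + y)]
  have y2 : -1 ≤ y := by nlinarith [sq_nonneg (2 * x + y)]
  have x1 : x ≤ 2 := by nlinarith [sq_nonneg (x + 10 * y)]
  have x2 : -2 ≤ x := by nlinarith [sq_nonneg (x + 10 * y)]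
  clear hx hy hc hN hβ
  interval_cases y <;> interval_cases x <;> omega
end
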